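/- (Dihedral sieving for noncrossing partitions.) Let n be odd, let P ∈ ℤ[s,t] be the unique polynomial with P·{n+1}_{s,t}·{n}!_{s,t}·{n}!_{s,t} = {2n}!_{s,t}, and let ζ = exp(2πi/n) ∈ ℂ. Then for every integer ℓ, P(ζ^ℓ + ζ^{−ℓ}, −1) equals the number of noncrossing set partitions π of ℤ/nℤ fixed by the rotation x ↦ x+ℓ; and P(0, 1) equals the number of noncrossing set partitions of ℤ/nℤ fixed by x ↦ −x. -/

import Mathlib

open MvPolynomial

/-- The generalized Fibonacci polynomials `{m}_{s,t} ∈ ℤ[s,t]`, with `s = X 0`, `t = X 1`. -/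
noncomputable def gfib : ℕ → MvPolynomial (Fin 2) ℤ
  | 0 => 0
  | 1 => 1
  | (m + 2) => X 0 * gfib (m + 1) + X 1 * gfib m

/-- The Fibonacci factorial `{m}!_{s,t}`. -/
noncomputable def gfibFact : ℕ → MvPolynomial (Fin 2) ℤ
  | 0 => 1
  | (m + 1) => gfib (m + 1) * gfibFact m

/-- The primitive `n`-th root of unity `ζ = exp(2πi/n)`. -/
noncomputable def primRoot (n : ℕ) : ℂ := Complex.exp (2 * Real.pi * Complex.I / n)

/-- A set partition of `ℤ/nℤ` is noncrossing if there are no residues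
`a < b < c < d` (as natural numbers in `[0, n)`) with `a, c` in one block and `b, d` in a
different block. -/
def IsNoncrossing {n : ℕ} [NeZero n] (π : Finpartition (Finset.univ : Finset (ZMod n))) :
    Prop :=
  ¬ ∃ (a b c d : ZMod n) (B₁ B₂ : Finset (ZMod n)), B₁ ∈ π.parts ∧ B₂ ∈ π.parts ∧
      B₁ ≠ B₂ ∧ a ∈ B₁ ∧ c ∈ B₁ ∧ b ∈ B₂ ∧ d ∈ B₂ ∧
      a.val < b.val ∧ b.val < c.val ∧ c.val < d.val


open MvPolynomial

section alg
noncomputable def phi (b : ℂ) : MvPolynomial (Fin 2) ℤ →ₐ[ℤ] Polynomial ℂ :=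
  aeval ![Polynomial.X + Polynomial.C b, -(Polynomial.X * Polynomial.C b)]

lemma eval_phi (a b : ℂ) (P : MvPolynomial (Fin 2) ℤ) :
    (phi b P).eval a = aeval ![a + b, -(a * b)] P := by
  have : ((Polynomial.aeval a : Polynomial ℂ →ₐ[ℂ] ℂ).restrictScalars ℤ).comp (phi b)
      = aeval ![a + b, -(a * b)] := by
    apply MvPolynomial.algHom_ext
    intro i
    fin_cases i
    · simp [phi]
    · simp [phi]
      exact mul_comm _ _
  have h := congrArg (fun f => f P) this
  simpa [Polynomial.aeval_def, Polynomial.eval₂_eq_eval_map] using h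

lemma phi_gfib (b : ℂ) (m : ℕ) :
    phi b (gfib m) * (Polynomial.X - Polynomial.C b) = Polynomial.X ^ m - Polynomial.C b ^ m := by
  induction m using Nat.strong_induction_on with
  | _ m ih =>
    match m with
    | 0 => simp [gfib]
    | 1 => simp [gfib]
    | m + 2 =>
      have h1 := ih (m + 1) (by omega)
      have h0 := ih m (by omega)
      have e0 : phi b (X 0) = Polynomial.X + Polynomial.C b := by simp [phi]
      have e1 : phi b (X 1) = -(Polynomial.X * Polynomial.C b) := by simp [phi]
      simp only [gfib, map_add, map_mul, e0, e1]
      linear_combination (Polynomial.X + Polynomial.C b) * h1 - (Polynomial.X * Polynomial.C b) * h0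

lemma eval_phi_gfib (a b : ℂ) (m : ℕ) :
    (phi b (gfib m)).eval a * (a - b) = a ^ m - b ^ m := by
  have := congrArg (Polynomial.eval a) (phi_gfib b m)
  simpa using this

lemma phi_gfib_mul (b : ℂ) (d j : ℕ) (hb : b ^ d = 1) :
    phi b (gfib (d * j)) = phi b (gfib d) * ∑ i ∈ Finset.range j, (Polynomial.X ^ d) ^ i := by
  have hne : (Polynomial.X - Polynomial.C b) ≠ 0 := Polynomial.X_sub_C_ne_zero b
  apply mul_right_cancel₀ hne
  have h1 := phi_gfib b (d * j)
  have h2 := phi_gfib b d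
  have hC : (Polynomial.C b) ^ d = 1 := by rw [← map_pow, hb, map_one]
  rw [pow_mul (Polynomial.C b), hC, one_pow, pow_mul] at h1
  rw [hC] at h2
  have h3 := geom_sum_mul ((Polynomial.X : Polynomial ℂ) ^ d) j
  rw [h1, ← h3, ← h2]; ring

lemma gfibFact_add (m r : ℕ) :
    gfibFact (m + r) = gfibFact m * ∏ i ∈ Finset.range r, gfib (m + i + 1) := by
  induction r with
  | zero => simp
  | succ r ih =>
    rw [Finset.prod_range_succ, ← add_assoc, gfibFact, ih]; ring

lemma eval_period (a b : ℂ) (hab : a ≠ b) (d : ℕ) (ha : a ^ d = 1) (hb : b ^ d = 1) (k m : ℕ) :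
    (phi b (gfib (d * k + m))).eval a = (phi b (gfib m)).eval a := by
  apply mul_right_cancel₀ (sub_ne_zero.2 hab)
  rw [eval_phi_gfib, eval_phi_gfib, pow_add, pow_add, pow_mul, pow_mul, ha, hb]; simp

lemma fact_fac (a b : ℂ) (hab : a ≠ b) (d : ℕ) (hd : 1 ≤ d) (ha : a ^ d = 1) (hb : b ^ d = 1) (k : ℕ) :
    ∃ H : Polynomial ℂ, phi b (gfibFact (d * k)) = phi b (gfib d) ^ k * H ∧
      H.eval a = k.factorial * (∏ i ∈ Finset.range (d - 1), (phi b (gfib (i + 1))).eval a) ^ k := by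
  induction k with
  | zero => exact ⟨1, by simp [gfibFact]⟩
  | succ k ih =>
    obtain ⟨H, h1, h2⟩ := ih
    refine ⟨H * (∏ i ∈ Finset.range (d - 1), phi b (gfib (d * k + i + 1))) *
      ∑ i ∈ Finset.range (k + 1), (Polynomial.X ^ d) ^ i, ?_, ?_⟩
    · obtain ⟨e, rfl⟩ : ∃ e, d = e + 1 := ⟨d - 1, by omega⟩
      have : (e + 1) * (k + 1) = ((e + 1) * k + e) + 1 := by ring
      rw [this, gfibFact, gfibFact_add]
      rw [← this, map_mul, map_mul, h1, phi_gfib_mul b _ _ hb, map_prod]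
      simp only [Nat.add_sub_cancel]
      ring
    · rw [Polynomial.eval_mul, Polynomial.eval_mul, h2, Polynomial.eval_prod]
      have : ∀ i ∈ Finset.range (d - 1), (phi b (gfib (d * k + i + 1))).eval a
          = (phi b (gfib (i + 1))).eval a := by
        intro i _
        rw [add_assoc]; exact eval_period a b hab d ha hb k (i + 1)
      rw [Finset.prod_congr rfl this, Polynomial.eval_finsetSum]
      simp [ha, Nat.factorial_succ]
      ring

lemma phi_gfib_ne (b : ℂ) (d : ℕ) (hd : 1 ≤ d) : phi b (gfib d) ≠ 0 := by
  intro h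
  have := phi_gfib b d
  rw [h, zero_mul, ← map_pow] at this
  exact Polynomial.X_pow_sub_C_ne_zero hd (b ^ d) this.symm

lemma alg_rot (a b : ℂ) (d k : ℕ) (hd : 2 ≤ d) (ha : a ^ d = 1) (hb : b ^ d = 1)
    (hr : ∀ r, 0 < r → r < d → a ^ r ≠ b ^ r) (P : MvPolynomial (Fin 2) ℤ)
    (hP : P * (gfib (d * k + 1) * gfibFact (d * k) * gfibFact (d * k)) = gfibFact (2 * (d * k))) :
    aeval ![a + b, -(a * b)] P = ((2 * k).choose k : ℂ) := by
  have hab : a ≠ b := by simpa using hr 1 (by omega) (by omega)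
  obtain ⟨H1, e1, v1⟩ := fact_fac a b hab d (by omega) ha hb k
  obtain ⟨H2, e2, v2⟩ := fact_fac a b hab d (by omega) ha hb (2 * k)
  set R := ∏ i ∈ Finset.range (d - 1), (phi b (gfib (i + 1))).eval a
  have hR : R ≠ 0 := by
    refine Finset.prod_ne_zero_iff.2 fun i hi h => ?_
    have := eval_phi_gfib a b (i + 1)
    rw [h, zero_mul] at this
    exact hr (i + 1) (by omega) (by have := Finset.mem_range.1 hi; omega) (sub_eq_zero.1 this.symm)
  have h := congrArg (phi b) hP
  rw [show 2 * (d * k) = d * (2 * k) by ring] at h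
  simp only [map_mul, e1, e2] at h
  have hG := phi_gfib_ne b d (by omega)
  have h' : phi b P * (phi b (gfib (d * k + 1)) * H1 * H1) = H2 := by
    apply mul_left_cancel₀ (pow_ne_zero (2 * k) hG)
    rw [← h]; ring
  have h3 := congrArg (Polynomial.eval a) h'
  simp only [Polynomial.eval_mul, v1, v2, eval_phi, eval_period a b hab d ha hb k 1] at h3
  rw [← eval_phi] at h3 ⊢
  have g1 : (aeval ![a + b, -(a * b)] (gfib 1) : ℂ) = 1 := by simp [gfib]
  rw [g1] at h3
  have hc := Nat.choose_mul_factorial_mul_factorial (show k ≤ 2 * k by omega)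
  rw [show 2 * k - k = k by omega] at hc
  have hc' : ((2 * k).choose k : ℂ) * k.factorial * k.factorial = (2 * k).factorial := by
    exact_mod_cast hc
  have hk : (k.factorial : ℂ) ≠ 0 := by exact_mod_cast k.factorial_ne_zero
  have hz : (k.factorial * R ^ k) * (k.factorial * R ^ k) ≠ (0 : ℂ) := by positivity
  apply mul_right_cancel₀ hz
  linear_combination h3 - R ^ (2 * k) * hc'

lemma alg_refl (m : ℕ) (P : MvPolynomial (Fin 2) ℤ)
    (hP : P * (gfib (2 * m + 1 + 1) * gfibFact (2 * m + 1) * gfibFact (2 * m + 1))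
      = gfibFact (2 * (2 * m + 1))) :
    aeval ![(0 : ℂ), 1] P = ((2 * m + 1).choose m : ℂ) := by
  have hab : (1 : ℂ) ≠ -1 := by norm_num
  have hb : (-1 : ℂ) ^ 2 = 1 := by norm_num
  obtain ⟨H1, e1, v1⟩ := fact_fac 1 (-1) hab 2 (by omega) (by norm_num) hb m
  obtain ⟨H2, e2, v2⟩ := fact_fac 1 (-1) hab 2 (by omega) (by norm_num) hb (2 * m + 1)
  have g1 : ((phi (-1) (gfib 1)).eval 1 : ℂ) = 1 := by simp [gfib]
  have g2 : ((phi (-1) (gfib (2 * m + 1))).eval 1 : ℂ) = 1 := by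
    rw [eval_period 1 (-1) hab 2 (by norm_num) hb m 1, g1]
  simp only [Nat.add_one_sub_one, Finset.prod_range_one, zero_add, g1, one_pow, mul_one] at v1 v2
  have h := congrArg (phi (-1)) hP
  rw [show 2 * m + 1 + 1 = 2 * (m + 1) by ring] at h
  rw [gfibFact] at h
  simp only [map_mul, e1, e2, phi_gfib_mul (-1) 2 (m + 1) hb] at h
  have hG := phi_gfib_ne (-1) 2 (by omega)
  have h' : phi (-1) P * ((∑ i ∈ Finset.range (m + 1), (Polynomial.X ^ 2) ^ i) *
      (phi (-1) (gfib (2 * m + 1)) * H1) * (phi (-1) (gfib (2 * m + 1)) * H1)) = H2 := by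
    apply mul_left_cancel₀ (pow_ne_zero (2 * m + 1) hG)
    rw [← h]; ring
  have h3 := congrArg (Polynomial.eval 1) h'
  simp only [Polynomial.eval_mul, v1, v2, g2, Polynomial.eval_finsetSum] at h3
  simp only [Polynomial.eval_pow, Polynomial.eval_X, one_pow, Finset.sum_const, Finset.card_range,
    eval_phi] at h3
  norm_num at h3
  have hc := Nat.choose_mul_factorial_mul_factorial (show m ≤ 2 * m + 1 by omega)
  rw [show 2 * m + 1 - m = m + 1 by omega, Nat.factorial_succ] at hc
  have hc' : ((2 * m + 1).choose m : ℂ) * m.factorial * ((m + 1) * m.factorial)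
      = (2 * m + 1).factorial := by
    exact_mod_cast hc
  have hk : (m.factorial : ℂ) ≠ 0 := by exact_mod_cast m.factorial_ne_zero
  have hm : (m + 1 : ℂ) ≠ 0 := by exact_mod_cast m.succ_ne_zero
  have hz : (m + 1 : ℂ) * (m.factorial * m.factorial) ≠ (0 : ℂ) := by positivity
  apply mul_right_cancel₀ hz
  linear_combination h3 - hc'

lemma alg_id (n : ℕ) (P : MvPolynomial (Fin 2) ℤ)
    (hP : P * (gfib (n + 1) * gfibFact n * gfibFact n) = gfibFact (2 * n)) :
    aeval ![(2 : ℂ), -1] P = (catalan n : ℂ) := by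
  have hg : ∀ m, (aeval ![(2 : ℂ), -1] (gfib m) : ℂ) = m := by
    intro m
    induction m using Nat.strong_induction_on with
    | _ m ih =>
      match m with
      | 0 => simp [gfib]
      | 1 => simp [gfib]
      | m + 2 =>
        simp only [gfib, map_add, map_mul, ih (m + 1) (by omega), ih m (by omega)]
        simp
        ring
  have hf : ∀ m, (aeval ![(2 : ℂ), -1] (gfibFact m) : ℂ) = m.factorial := by
    intro m
    induction m with
    | zero => simp [gfibFact]
    | succ m ih => rw [gfibFact, map_mul, hg, ih, Nat.factorial_succ]; push_cast; ring
  have h := congrArg (aeval ![(2 : ℂ), -1]) hP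
  simp only [map_mul, hg, hf] at h
  have h1 := succ_mul_catalan_eq_centralBinom n
  have hc := Nat.choose_mul_factorial_mul_factorial (show n ≤ 2 * n by omega)
  rw [show 2 * n - n = n by omega, ← Nat.centralBinom, ← h1] at hc
  have hc' : (((n + 1 : ℕ) : ℂ) * catalan n) * n.factorial * n.factorial = (2 * n).factorial := by
    exact_mod_cast hc
  have hk : (n.factorial : ℂ) ≠ 0 := by exact_mod_cast n.factorial_ne_zero
  have hm : ((n + 1 : ℕ) : ℂ) ≠ 0 := by exact_mod_cast n.succ_ne_zero
  have hz : ((n + 1 : ℕ) : ℂ) * n.factorial * n.factorial ≠ (0 : ℂ) := by positivity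
  apply mul_right_cancel₀ hz
  linear_combination h - hc'
end alg


section paths

def ENC (N : ℤ) (T : Setoid ℤ) : Prop :=
  (∀ a b c d, a < b → b < c → c < d → T a c → T b d → T a b) ∧
    ∀ x y, T (x + N) (y + N) ↔ T x y

def IsPath (N : ℤ) (h : ℤ → ℤ) : Prop :=
  h 0 = 0 ∧ (∀ p, h (p + 1) = h p + 1 ∨ h (p + 1) = h p - 1) ∧ ∀ p, h (p + 2 * N) = h p

def relOf (h : ℤ → ℤ) : Setoid ℤ where
  r x y := h (2 * x + 1) = h (2 * y + 1) ∧
    ∀ p, min (2 * x + 1) (2 * y + 1) ≤ p → p ≤ max (2 * x + 1) (2 * y + 1) → h (2 * x + 1) ≤ h p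
  iseqv := by
    refine ⟨fun x => ⟨rfl, fun p h1 h2 => ?_⟩, fun {x y} hxy => ⟨hxy.1.symm, fun p h1 h2 => ?_⟩,
      fun {x y z} hxy hyz => ⟨hxy.1.trans hyz.1, fun p h1 h2 => ?_⟩⟩
    · have : p = 2 * x + 1 := by omega
      rw [this]
    · rw [← hxy.1]; exact hxy.2 p (by omega) (by omega)
    · by_cases hp : min (2 * x + 1) (2 * y + 1) ≤ p ∧ p ≤ max (2 * x + 1) (2 * y + 1)
      · exact hxy.2 p hp.1 hp.2
      · rw [hxy.1]; exact hyz.2 p (by omega) (by omega)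

lemma relOf_iff (h : ℤ → ℤ) (x y : ℤ) : relOf h x y ↔ h (2 * x + 1) = h (2 * y + 1) ∧
    ∀ p, min (2 * x + 1) (2 * y + 1) ≤ p → p ≤ max (2 * x + 1) (2 * y + 1) → h (2 * x + 1) ≤ h p :=
  Iff.rfl

lemma relOf_lt (h : ℤ → ℤ) (x y : ℤ) (hxy : x ≤ y) : relOf h x y ↔ h (2 * x + 1) = h (2 * y + 1) ∧
    ∀ p, 2 * x + 1 ≤ p → p ≤ 2 * y + 1 → h (2 * x + 1) ≤ h p := by
  rw [relOf_iff, min_eq_left (by omega), max_eq_right (by omega)]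

lemma relOf_mem {N : ℤ} {h : ℤ → ℤ} (hh : IsPath N h) : ENC N (relOf h) := by
  refine ⟨fun a b c d hab hbc hcd h1 h2 => ?_, fun x y => ?_⟩
  · rw [relOf_lt _ _ _ (by omega)] at h1 h2 ⊢
    have e1 := h1.2 (2 * b + 1) (by omega) (by omega)
    have e2 := h2.2 (2 * c + 1) (by omega) (by omega)
    refine ⟨by omega, fun p hp hp' => h1.2 p hp (by omega)⟩
  · have e : ∀ z, h (2 * (z + N) + 1) = h (2 * z + 1) := fun z => by
      rw [← hh.2.2 (2 * z + 1)]; congr 1; ring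
    rw [relOf_iff, relOf_iff, e, e]
    refine and_congr_right fun _ => ⟨fun H p h1 h2 => ?_, fun H p h1 h2 => ?_⟩
    · rw [← hh.2.2 p]; exact H _ (by omega) (by omega)
    · have := H (p - 2 * N) (by omega) (by omega)
      rw [← hh.2.2 (p - 2 * N)] at this
      simpa using this

lemma path_parity {N : ℤ} {h : ℤ → ℤ} (hh : IsPath N h) (p : ℤ) : (h p - p) % 2 = 0 := by
  induction p using Int.induction_on with
  | zero => simp [hh.1]
  | succ i ih => have := hh.2.1 i; omega
  | pred i ih =>
    have := hh.2.1 (-i - 1)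
    rw [show (-(i:ℤ) - 1 + 1) = -i by ring] at this
    omega

lemma path_periods {N : ℤ} {h : ℤ → ℤ} (hh : IsPath N h) (j p : ℤ) : h (p + j * (2 * N)) = h p := by
  induction j using Int.induction_on with
  | zero => simp
  | succ i ih => rw [← ih, ← hh.2.2 (p + i * (2 * N))]; congr 1; ring
  | pred i ih => rw [← ih, ← hh.2.2 (p + (-i - 1) * (2 * N))]; congr 1; ring

lemma path_rev {N : ℤ} {h : ℤ → ℤ} (hh : IsPath N h) : IsPath N (fun p => h (-p)) := by
  refine ⟨by simpa using hh.1, fun p => ?_, fun p => ?_⟩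
  · have := hh.2.1 (-(p + 1))
    rw [show -(p + 1) + 1 = -p by ring] at this
    simp only
    omega
  · have := hh.2.2 (-(p + 2 * N))
    simp only
    rw [← this]; congr 1; ring

lemma relOf_rev (h : ℤ → ℤ) (x y : ℤ) :
    relOf (fun p => h (-p)) x y ↔ relOf h (-1 - x) (-1 - y) := by
  have e : ∀ z : ℤ, 2 * (-1 - z) + 1 = -(2 * z + 1) := fun z => by ring
  rw [relOf_iff, relOf_iff]
  simp only [e]
  refine and_congr_right fun _ => ⟨fun H p h1 h2 => ?_, fun H p h1 h2 => ?_⟩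
  · have := H (-p) (by omega) (by omega)
    simpa using this
  · exact H (-p) (by omega) (by omega)

/-- last visit strictly before `q` to a level at most `v`. -/
lemma last_visit {N : ℤ} (hN : 0 < N) {h : ℤ → ℤ} (hh : IsPath N h) (q v : ℤ) (hv : v < h q)
    (hex : ∃ p, h p ≤ v) : ∃ p, p < q ∧ h p = v ∧ ∀ r, p < r → r ≤ q → v < h r := by
  obtain ⟨p0, hp0⟩ := hex
  have hinh : ∃ z : ℤ, z ≤ q ∧ h z ≤ v := by
    refine ⟨p0 + (-(|p0| + |q|)) * (2 * N), ?_, by rw [path_periods hh]; exact hp0⟩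
    have h1 := le_abs_self p0
    have h2 := neg_abs_le q
    have h3 := abs_nonneg p0
    have h4 := abs_nonneg q
    nlinarith
  obtain ⟨p, ⟨hp1, hp2⟩, hp3⟩ := Int.exists_greatest_of_bdd
    (P := fun z => z ≤ q ∧ h z ≤ v) ⟨q, fun z hz => hz.1⟩ hinh
  have hpq : p ≠ q := by rintro rfl; omega
  have hb : ∀ r, p < r → r ≤ q → v < h r := by
    intro r h1 h2
    by_contra hc
    have := hp3 r ⟨h2, by omega⟩
    omega
  refine ⟨p, by omega, ?_, hb⟩
  have := hb (p + 1) (by omega) (by omega)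
  have := hh.2.1 p
  omega

lemma relOf_A {N : ℤ} (hN : 0 < N) {h : ℤ → ℤ} (hh : IsPath N h) (x : ℤ) :
    (∃ y, y < x ∧ relOf h y x) ↔ h (2 * x + 1) = h (2 * x) - 1 := by
  constructor
  · rintro ⟨y, hy, hr⟩
    rw [relOf_lt _ _ _ (by omega)] at hr
    have := hr.2 (2 * x) (by omega) (by omega)
    have := hh.2.1 (2 * x)
    omega
  · intro hx
    obtain ⟨p, h1, h2, h3⟩ := last_visit hN hh (2 * x) (h (2 * x + 1)) (by omega) ⟨_, le_rfl⟩
    have e1 := path_parity hh p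
    have e2 := path_parity hh (2 * x + 1)
    obtain ⟨y, rfl⟩ : ∃ y, p = 2 * y + 1 := ⟨p / 2, by omega⟩
    refine ⟨y, by omega, ?_⟩
    rw [relOf_lt _ _ _ (by omega)]
    refine ⟨h2, fun r hr hr' => ?_⟩
    rcases eq_or_lt_of_le hr with rfl | hr
    · exact le_rfl
    · rcases eq_or_lt_of_le hr' with rfl | hr'
      · omega
      · have := h3 r hr (by omega)
        omega

lemma relOf_B {N : ℤ} (hN : 0 < N) {h : ℤ → ℤ} (hh : IsPath N h) (x : ℤ) :
    (∃ y, x < y ∧ relOf h x y) ↔ h (2 * x + 2) = h (2 * x + 1) + 1 := by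
  have := relOf_A hN (path_rev hh) (-1 - x)
  simp only [relOf_rev] at this
  rw [show (-1 - (-1 - x)) = x by ring, show -(2 * (-1 - x) + 1) = 2 * x + 1 by ring,
    show -(2 * (-1 - x)) = 2 * x + 2 by ring] at this
  rw [show (h (2 * x + 2) = h (2 * x + 1) + 1 ↔ h (2 * x + 1) = h (2 * x + 2) - 1) by omega, ← this]
  constructor
  · rintro ⟨y, hy, hr⟩
    exact ⟨-1 - y, by omega, by rw [show (-1 - (-1 - y)) = y by ring]; exact Setoid.symm' _ hr⟩
  · rintro ⟨y, hy, hr⟩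
    exact ⟨-1 - y, by omega, Setoid.symm' _ hr⟩

lemma relOf_inj {N : ℤ} (hN : 0 < N) {h h' : ℤ → ℤ} (hh : IsPath N h) (hh' : IsPath N h')
    (e : relOf h = relOf h') : h = h' := by
  have hs : ∀ p, h (p + 1) - h p = h' (p + 1) - h' p := by
    intro p
    have s1 := hh.2.1 p
    have s2 := hh'.2.1 p
    obtain ⟨x, hx⟩ : ∃ x, p = 2 * x ∨ p = 2 * x + 1 := ⟨p / 2, by omega⟩
    rcases hx with rfl | rfl
    · have h1 := relOf_A hN hh x
      have h2 := relOf_A hN hh' x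
      rw [e, h2] at h1
      clear h2
      omega
    · have h1 := relOf_B hN hh x
      have h2 := relOf_B hN hh' x
      rw [e, h2] at h1
      clear h2
      rw [show 2 * x + 1 + 1 = 2 * x + 2 by ring] at *
      omega
  funext p
  induction p using Int.induction_on with
  | zero => rw [hh.1, hh'.1]
  | succ i ih => have := hs i; omega
  | pred i ih =>
    have := hs (-i - 1)
    rw [show (-(i:ℤ) - 1 + 1) = -i by ring] at this
    omega

lemma relOf_nonneg {N : ℤ} (hN : 0 < N) {h : ℤ → ℤ} (hh : IsPath N h) :
    (∀ x y, x < 0 → 0 ≤ y → ¬ relOf h x y) ↔ ∀ p, 0 ≤ h p := by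
  constructor
  · intro H
    by_contra hc
    push Not at hc
    obtain ⟨p, hp⟩ := hc
    obtain ⟨a, a1, a2, a3⟩ := last_visit hN hh 0 (-1) (by rw [hh.1]; omega) ⟨p, by omega⟩
    obtain ⟨b, b1, b2, b3⟩ := last_visit hN (path_rev hh) 0 (-1) (by simp [hh.1]) ⟨-p, by simp; omega⟩
    have e1 := path_parity hh a
    have e2 := path_parity hh (-b)
    obtain ⟨x, rfl⟩ : ∃ y, a = 2 * y + 1 := ⟨a / 2, by omega⟩
    obtain ⟨y, hy⟩ : ∃ y, -b = 2 * y + 1 := ⟨(-b) / 2, by omega⟩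
    refine H x y (by omega) (by omega) ?_
    rw [relOf_lt _ _ _ (by omega), ← hy]
    refine ⟨by omega, fun q q1 q2 => ?_⟩
    rcases eq_or_lt_of_le q1 with rfl | q1
    · exact le_rfl
    · rcases eq_or_lt_of_le q2 with rfl | q2
      · omega
      · rcases le_total q 0 with hq | hq
        · have := a3 q q1 hq
          omega
        · have := b3 (-q) (by omega) (by omega)
          rw [neg_neg] at this
          omega
  · intro H x y hx hy hr
    rw [relOf_lt _ _ _ (by omega)] at hr
    have h0 := hr.2 0 (by omega) (by omega)
    rw [hh.1] at h0
    have := H (2 * x + 1)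
    have := path_parity hh (2 * x + 1)
    omega

lemma relOf_symm {N : ℤ} (hN : 0 < N) {h : ℤ → ℤ} (hh : IsPath N h) :
    (∀ x y, relOf h (-1 - x) (-1 - y) ↔ relOf h x y) ↔ ∀ p, h (-p) = h p := by
  constructor
  · intro H p
    have : (fun p => h (-p)) = h := by
      apply relOf_inj hN (path_rev hh) hh
      ext x y
      rw [relOf_rev, H]
    exact congrFun this p
  · intro H x y
    rw [← relOf_rev]
    have : (fun p => h (-p)) = h := funext H
    rw [this]

end paths


section surj

variable (T : Setoid ℤ)

def Str (x : ℤ) : Set (Quotient T) := {q | ∃ a b, a < x ∧ x ≤ b ∧ ⟦a⟧ = q ∧ ⟦b⟧ = q}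
def Dst (x : ℤ) : Set (Quotient T) :=
  {q | q ≠ ⟦x⟧ ∧ ∃ a b, a < x ∧ x < b ∧ ⟦a⟧ = q ∧ ⟦b⟧ = q}

lemma enc_periods {T : Setoid ℤ} {N : ℤ} (hT : ENC N T) (j x y : ℤ) :
    T (x + j * N) (y + j * N) ↔ T x y := by
  induction j using Int.induction_on with
  | zero => simp
  | succ i ih =>
    rw [← ih, ← hT.2 (x + i * N)]
    rw [show x + ((i:ℤ) + 1) * N = x + i * N + N by ring, show y + ((i:ℤ) + 1) * N = y + i * N + N by ring]
  | pred i ih =>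
    rw [← ih, ← hT.2 (x + (-i - 1) * N)]
    rw [show x + (-(i:ℤ) - 1) * N + N = x + -i * N by ring, show y + (-(i:ℤ) - 1) * N + N = y + -i * N by ring]

lemma str_finite {T : Setoid ℤ} {N : ℤ} (hN : 0 < N) (hT : ENC N T) (x : ℤ) : (Str T x).Finite := by
  refine Set.Finite.subset ((Set.finite_Ico (x - N) x).image (fun a => (⟦a⟧ : Quotient T))) ?_
  rintro q ⟨a, b, h1, h2, h3, h4⟩
  have hab : T a b := Quotient.exact (h3.trans h4.symm)
  have hm := Int.emod_nonneg (a - x) hN.ne'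
  have hm' := Int.emod_lt_of_pos (a - x) hN
  have hd := Int.emod_add_mul_ediv (a - x) N
  set j := (a - x) / N
  have e : a + (-1 - j) * N = x - N + (a - x) % N := by linear_combination -hd
  have hj : (-1 - j) * N = x - N + (a - x) % N - a := by linear_combination e
  have hle : 0 ≤ -1 - j := by
    have : j < 0 := Int.ediv_neg_of_neg_of_pos (by omega) hN
    omega
  refine ⟨a + (-1 - j) * N, ⟨by omega, by omega⟩, ?_⟩
  rw [← h3]
  rcases eq_or_lt_of_le hle with h0 | h0
  · rw [← h0]; simp
  · apply Quotient.sound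
    have hpos : 0 < (-1 - j) * N := by positivity
    apply Setoid.symm' T
    exact hT.1 a (a + (-1 - j) * N) b (b + (-1 - j) * N) (by omega) (by omega) (by omega) hab
      ((enc_periods hT _ _ _).2 hab)

lemma dst_sub (x : ℤ) : Dst T x ⊆ Str T x := by
  rintro q ⟨_, a, b, h1, h2, h3, h4⟩
  exact ⟨a, b, h1, by omega, h3, h4⟩

lemma str_eq (x : ℤ) [Decidable (∃ y, y < x ∧ T y x)] : Str T x = if (∃ y, y < x ∧ T y x) then insert ⟦x⟧ (Dst T x) else Dst T x := by
  split_ifs with h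
  · apply Set.Subset.antisymm
    · rintro q ⟨a, b, h1, h2, h3, h4⟩
      by_cases hq : q = ⟦x⟧
      · exact Or.inl hq
      · refine Or.inr ⟨hq, a, b, h1, ?_, h3, h4⟩
        rcases eq_or_lt_of_le h2 with rfl | h2
        · exact absurd h4.symm hq
        · exact h2
    · apply Set.insert_subset _ (dst_sub T x)
      obtain ⟨y, hy, hr⟩ := h
      exact ⟨y, x, hy, le_rfl, Quotient.sound hr, rfl⟩
  · apply Set.Subset.antisymm _ (dst_sub T x)
    rintro q ⟨a, b, h1, h2, h3, h4⟩
    have hq : q ≠ ⟦x⟧ := by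
      rintro rfl
      exact h ⟨a, h1, Quotient.exact h3⟩
    refine ⟨hq, a, b, h1, ?_, h3, h4⟩
    rcases eq_or_lt_of_le h2 with rfl | h2
    · exact absurd h4.symm hq
    · exact h2

lemma str_succ_eq (x : ℤ) [Decidable (∃ y, x < y ∧ T x y)] : Str T (x + 1) = if (∃ y, x < y ∧ T x y) then insert ⟦x⟧ (Dst T x) else Dst T x := by
  have key : ∀ q, q ≠ ⟦x⟧ → (q ∈ Str T (x + 1) ↔ q ∈ Dst T x) := by
    intro q hq
    constructor
    · rintro ⟨a, b, h1, h2, h3, h4⟩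
      refine ⟨hq, a, b, ?_, by omega, h3, h4⟩
      rcases eq_or_lt_of_le (show a ≤ x by omega) with rfl | h2
      · exact absurd h3.symm hq
      · exact h2
    · rintro ⟨_, a, b, h1, h2, h3, h4⟩
      exact ⟨a, b, by omega, by omega, h3, h4⟩
  have hx : (⟦x⟧ : Quotient T) ∈ Str T (x + 1) ↔ ∃ y, x < y ∧ T x y := by
    constructor
    · rintro ⟨a, b, h1, h2, h3, h4⟩
      exact ⟨b, by omega, Quotient.exact h4.symm⟩
    · rintro ⟨y, hy, hr⟩
      exact ⟨x, y, by omega, by omega, rfl, (Quotient.sound hr).symm⟩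
  have hx' : (⟦x⟧ : Quotient T) ∉ Dst T x := fun h => h.1 rfl
  ext q
  by_cases hq : q = ⟦x⟧
  · subst hq
    rw [hx]
    split_ifs with h <;> simp [h, hx']
  · rw [key q hq]
    split_ifs with h <;> simp [hq]

open Classical in
noncomputable def hOf (p : ℤ) : ℤ :=
  (if p % 2 = 0 then 2 * ((Str T (p / 2)).ncard : ℤ) else 2 * ((Dst T (p / 2)).ncard : ℤ) + 1)
    - 2 * ((Str T 0).ncard : ℤ)

lemma hOf_even (x : ℤ) : hOf T (2 * x) = 2 * ((Str T x).ncard : ℤ) - 2 * ((Str T 0).ncard : ℤ) := by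
  rw [hOf, if_pos (by omega), show 2 * x / 2 = x by omega]

lemma hOf_odd (x : ℤ) :
    hOf T (2 * x + 1) = 2 * ((Dst T x).ncard : ℤ) + 1 - 2 * ((Str T 0).ncard : ℤ) := by
  rw [hOf, if_neg (by omega), show (2 * x + 1) / 2 = x by omega]

variable {T} {N : ℤ}

open Classical in
lemma str_card (hN : 0 < N) (hT : ENC N T) (x : ℤ) :
    (Str T x).ncard = (Dst T x).ncard + if (∃ y, y < x ∧ T y x) then 1 else 0 := by
  have hf := (str_finite hN hT x).subset (dst_sub T x)
  have hx' : (⟦x⟧ : Quotient T) ∉ Dst T x := fun h => h.1 rfl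
  rw [str_eq]
  split_ifs
  · exact Set.ncard_insert_of_notMem hx' hf
  · rfl

open Classical in
lemma str_succ_card (hN : 0 < N) (hT : ENC N T) (x : ℤ) :
    (Str T (x + 1)).ncard = (Dst T x).ncard + if (∃ y, x < y ∧ T x y) then 1 else 0 := by
  have hf := (str_finite hN hT x).subset (dst_sub T x)
  have hx' : (⟦x⟧ : Quotient T) ∉ Dst T x := fun h => h.1 rfl
  rw [str_succ_eq]
  split_ifs
  · exact Set.ncard_insert_of_notMem hx' hf
  · rfl

lemma str_shift_le (hN : 0 < N) (hT : ENC N T) (x : ℤ) (j : ℤ) :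
    (Str T x).ncard ≤ (Str T (x + j * N)).ncard := by
  have hl : ∀ a b, T a b → (⟦a + j * N⟧ : Quotient T) = ⟦b + j * N⟧ := fun a b h =>
    Quotient.sound ((enc_periods hT j a b).2 h)
  refine Set.ncard_le_ncard_of_injOn (Quotient.lift (fun a => (⟦a + j * N⟧ : Quotient T)) hl) ?_ ?_
    (str_finite hN hT _)
  · rintro q ⟨a, b, h1, h2, h3, h4⟩
    subst h3
    exact ⟨a + j * N, b + j * N, by omega, by omega, rfl, hl _ _ (Quotient.exact h4)⟩
  · intro q _ q' _
    induction q using Quotient.inductionOn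
    induction q' using Quotient.inductionOn
    intro h
    exact Quotient.sound ((enc_periods hT j _ _).1 (Quotient.exact h))

lemma str_shift (hN : 0 < N) (hT : ENC N T) (x : ℤ) :
    (Str T (x + N)).ncard = (Str T x).ncard := by
  apply le_antisymm
  · have := str_shift_le hN hT (x + N) (-1)
    simpa using this
  · have := str_shift_le hN hT x 1
    simpa using this

lemma hOf_path (hN : 0 < N) (hT : ENC N T) : IsPath N (hOf T) := by
  classical
  have e0 : ∀ p : ℤ, ∃ x, p = 2 * x ∨ p = 2 * x + 1 := fun p => ⟨p / 2, by omega⟩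
  have s1 : ∀ x, hOf T (2 * x + 1) = hOf T (2 * x) + 1 - 2 * (if (∃ y, y < x ∧ T y x) then 1 else 0) := by
    intro x
    rw [hOf_odd, hOf_even, str_card hN hT x]; push_cast; ring
  refine ⟨?_, ?_, ?_⟩
  · have := hOf_even T 0
    simpa using this
  · intro p
    obtain ⟨x, rfl | rfl⟩ := e0 p
    · rw [s1]; split_ifs <;> omega
    · rw [show 2 * x + 1 + 1 = 2 * (x + 1) by ring, hOf_even, str_succ_card hN hT x, hOf_odd]
      push_cast
      split_ifs <;> omega
  · intro p
    have ev : ∀ x, hOf T (2 * (x + N)) = hOf T (2 * x) := by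
      intro x
      rw [hOf_even, hOf_even, str_shift hN hT]
    obtain ⟨x, rfl | rfl⟩ := e0 p
    · rw [← ev, mul_add]
    · rw [show 2 * x + 1 + 2 * N = 2 * (x + N) + 1 by ring, s1, s1, ev]
      have : (∃ y, y < x + N ∧ T y (x + N)) ↔ (∃ y, y < x ∧ T y x) := by
        constructor
        · rintro ⟨y, h1, h2⟩
          refine ⟨y - N, by omega, (hT.2 _ _).1 (by simpa using h2)⟩
        · rintro ⟨y, h1, h2⟩
          exact ⟨y + N, by omega, (hT.2 _ _).2 h2⟩
      simp only [this]

lemma dst_eq (hT : ENC N T) {x y : ℤ} (hxy : x < y) (hr : T x y) : Dst T x = Dst T y := by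
  have e : (⟦x⟧ : Quotient T) = ⟦y⟧ := Quotient.sound hr
  ext q
  constructor
  · rintro ⟨hq, a, b, h1, h2, h3, h4⟩
    refine ⟨e ▸ hq, a, b, by omega, ?_, h3, h4⟩
    have hab : T a b := Quotient.exact (h3.trans h4.symm)
    rcases lt_trichotomy y b with h | rfl | h
    · exact h
    · exact absurd (h4.symm.trans e.symm) hq
    · exact absurd (h3.symm.trans (Quotient.sound (hT.1 a x b y h1 h2 h hab hr))) hq
  · rintro ⟨hq, a, b, h1, h2, h3, h4⟩
    refine ⟨e ▸ hq, a, b, ?_, by omega, h3, h4⟩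
    have hab : T a b := Quotient.exact (h3.trans h4.symm)
    rcases lt_trichotomy a x with h | rfl | h
    · exact h
    · exact absurd (h3.symm.trans e) hq
    · have := Quotient.sound (s := T) (hT.1 x a y b h h1 h2 hr hab)
      exact absurd (h3.symm.trans (this.symm.trans e)) hq

lemma str_ge (hN : 0 < N) (hT : ENC N T) {x y z : ℤ} (hxz : x < z) (hzy : z ≤ y) (hr : T x y) :
    (Dst T x).ncard + 1 ≤ (Str T z).ncard := by
  have hf := (str_finite hN hT x).subset (dst_sub T x)
  have hx' : (⟦x⟧ : Quotient T) ∉ Dst T x := fun h => h.1 rfl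
  rw [← Set.ncard_insert_of_notMem hx' hf]
  apply Set.ncard_le_ncard _ (str_finite hN hT z)
  apply Set.insert_subset
  · exact ⟨x, y, hxz, hzy, rfl, (Quotient.sound hr).symm⟩
  · rintro q ⟨hq, a, b, h1, h2, h3, h4⟩
    refine ⟨a, b, by omega, ?_, h3, h4⟩
    have hab : T a b := Quotient.exact (h3.trans h4.symm)
    by_contra h
    exact absurd (h3.symm.trans (Quotient.sound (hT.1 a x b y h1 h2 (by omega) hab hr))) hq

lemma relOf_hOf (hN : 0 < N) (hT : ENC N T) : relOf (hOf T) = T := by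
  classical
  have hp := hOf_path hN hT
  have key : ∀ x y, x < y → (relOf (hOf T) x y ↔ T x y) := by
    intro x y hxy
    rw [relOf_lt _ _ _ hxy.le]
    constructor
    · rintro ⟨h1, h2⟩
      rw [hOf_odd, hOf_odd] at h1
      by_contra hn
      obtain ⟨w, ⟨w1, w2⟩, w3⟩ := Int.exists_greatest_of_bdd
        (P := fun z => z ≤ y ∧ T x z) ⟨y, fun z hz => hz.1⟩ ⟨x, hxy.le, Setoid.refl' T x⟩
      have hwy : w < y := by
        rcases eq_or_lt_of_le w1 with rfl | h
        · exact absurd w2 hn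
        · exact h
      have hxw : x ≤ w := w3 x ⟨hxy.le, Setoid.refl' T x⟩
      have hD : Dst T x = Dst T w := by
        rcases eq_or_lt_of_le hxw with rfl | h
        · rfl
        · exact dst_eq hT h w2
      have h3 := h2 (2 * (w + 1)) (by omega) (by omega)
      rw [hOf_odd, hOf_even, str_succ_card hN hT, hD] at h3
      split_ifs at h3 with hB
      swap
      · omega
      obtain ⟨v, hv, hr⟩ := hB
      have hvy : y < v := by
        by_contra hc
        have := w3 v ⟨by omega, Setoid.trans' T w2 hr⟩
        omega
      have hwny : (⟦w⟧ : Quotient T) ≠ ⟦y⟧ := fun h => hn (Setoid.trans' T w2 (Quotient.exact h))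
      have hx' : (⟦w⟧ : Quotient T) ∉ Dst T w := fun h => h.1 rfl
      have hf := (str_finite hN hT w).subset (dst_sub T w)
      have hle : (insert ⟦w⟧ (Dst T w)).ncard ≤ (Dst T y).ncard := by
        apply Set.ncard_le_ncard _ ((str_finite hN hT y).subset (dst_sub T y))
        apply Set.insert_subset
        · exact ⟨hwny, w, v, hwy, hvy, rfl, (Quotient.sound hr).symm⟩
        · rintro q ⟨hq, a, b, a1, a2, a3, a4⟩
          have hab : T a b := Quotient.exact (a3.trans a4.symm)
          refine ⟨?_, a, b, by omega, ?_, a3, a4⟩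
          · rintro rfl
            have := hT.1 a w y v a1 hwy hvy (Quotient.exact a3) hr
            exact hq (a3.symm.trans (Quotient.sound this))
          · by_contra hc
            exact hq (a3.symm.trans (Quotient.sound (hT.1 a w b v a1 a2 (by omega) hab hr)))
      rw [Set.ncard_insert_of_notMem hx' hf, ← hD] at hle
      omega
    · intro hr
      have e1 : hOf T (2 * x + 1) = hOf T (2 * y + 1) := by
        rw [hOf_odd, hOf_odd, dst_eq hT hxy hr]
      refine ⟨e1, fun p p1 p2 => ?_⟩
      have ev : ∀ z, x < z → z ≤ y → hOf T (2 * x + 1) + 1 ≤ hOf T (2 * z) := by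
        intro z z1 z2
        have := str_ge hN hT z1 z2 hr
        rw [hOf_odd, hOf_even]
        omega
      obtain ⟨z, hz⟩ : ∃ z, p = 2 * z ∨ p = 2 * z + 1 := ⟨p / 2, by omega⟩
      rcases hz with rfl | rfl
      · have := ev z (by omega) (by omega)
        omega
      · rcases eq_or_lt_of_le (show x ≤ z by omega) with rfl | h
        · exact le_rfl
        · have := ev z h (by omega)
          have := hp.2.1 (2 * z)
          omega
  ext x y
  rcases lt_trichotomy x y with h | rfl | h
  · exact key x y h
  · exact ⟨fun _ => Setoid.refl' _ _, fun _ => Setoid.refl' _ _⟩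
  · have := key y x h
    exact ⟨fun hr => Setoid.symm' _ (this.1 (Setoid.symm' _ hr)),
      fun hr => Setoid.symm' _ (this.2 (Setoid.symm' _ hr))⟩

lemma card_enc (hN : 0 < N) (p : Setoid ℤ → Prop) (q : (ℤ → ℤ) → Prop)
    (hpq : ∀ h, IsPath N h → (p (relOf h) ↔ q h)) :
    Nat.card {T : Setoid ℤ // ENC N T ∧ p T} = Nat.card {h : ℤ → ℤ // IsPath N h ∧ q h} := by
  symm
  apply Nat.card_congr
  refine Equiv.ofBijective (fun h => ⟨relOf h.1, relOf_mem h.2.1, (hpq _ h.2.1).2 h.2.2⟩) ⟨?_, ?_⟩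
  · rintro ⟨h, h1, h2⟩ ⟨h', h1', h2'⟩ e
    simp only [Subtype.mk.injEq] at e ⊢
    exact relOf_inj hN h1 h1' e
  · rintro ⟨T, h1, h2⟩
    have e := relOf_hOf hN h1
    have hp := hOf_path hN h1
    refine ⟨⟨hOf T, hp, (hpq _ hp).1 (by rw [e]; exact h2)⟩, Subtype.ext e⟩

end surj


section count

def QS (S E : ℤ → Prop) (L : ℕ) (a : ℤ) : Set (ℕ → ℤ) :=
  {g | g 0 = a ∧ (∀ p, p < L → (g (p + 1) = g p + 1 ∨ g (p + 1) = g p - 1)) ∧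
    (∀ p, p ≤ L → S (g p)) ∧ E (g L) ∧ ∀ p, L ≤ p → g p = g L}

open Classical in
noncomputable def cnt (S E : ℤ → Prop) : ℕ → ℤ → ℕ
  | 0, a => if S a ∧ E a then 1 else 0
  | L + 1, a => if S a then cnt S E L (a + 1) + cnt S E L (a - 1) else 0

def consP (a : ℤ) (g : ℕ → ℤ) : ℕ → ℤ
  | 0 => a
  | p + 1 => g p

lemma consP_inj (a : ℤ) : Function.Injective (consP a) := by
  intro g g' h
  funext p
  exact congrFun h (p + 1)

lemma QS_succ (S E : ℤ → Prop) (L : ℕ) (a : ℤ) (ha : S a) :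
    QS S E (L + 1) a = consP a '' QS S E L (a + 1) ∪ consP a '' QS S E L (a - 1) := by
  ext g
  constructor
  · rintro ⟨h0, h1, h2, h3, h4⟩
    have hg : consP a (fun p => g (p + 1)) = g := by
      funext p
      cases p with
      | zero => exact h0.symm
      | succ p => rfl
    have hs := h1 0 (by omega)
    rw [h0] at hs
    have hm : ∀ b, g (0 + 1) = b → (fun p => g (p + 1)) ∈ QS S E L b := fun b hb =>
      ⟨hb, fun p hp => h1 (p + 1) (by omega), fun p hp => h2 (p + 1) (by omega), h3,
        fun p hp => h4 (p + 1) (by omega)⟩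
    rcases hs with hs | hs
    · exact Or.inl ⟨_, hm _ hs, hg⟩
    · exact Or.inr ⟨_, hm _ hs, hg⟩
  · have key : ∀ b g, (b = a + 1 ∨ b = a - 1) → g ∈ QS S E L b → consP a g ∈ QS S E (L + 1) a := by
      rintro b g hb ⟨h0, h1, h2, h3, h4⟩
      refine ⟨rfl, ?_, ?_, h3, ?_⟩
      · intro p hp
        cases p with
        | zero => simp only [consP, h0]; exact hb
        | succ p => exact h1 p (by omega)
      · intro p hp
        cases p with
        | zero => exact ha
        | succ p => exact h2 p (by omega)
      · intro p hp
        cases p with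
        | zero => omega
        | succ p => exact h4 p (by omega)
    rintro (⟨g, hg, rfl⟩ | ⟨g, hg, rfl⟩)
    · exact key _ g (Or.inl rfl) hg
    · exact key _ g (Or.inr rfl) hg

lemma QS_card (S E : ℤ → Prop) (L : ℕ) (a : ℤ) :
    (QS S E L a).Finite ∧ (QS S E L a).ncard = cnt S E L a := by
  induction L generalizing a with
  | zero =>
    by_cases h : S a ∧ E a
    · have : QS S E 0 a = {fun _ => a} := by
        ext g
        constructor
        · rintro ⟨h0, h1, h2, h3, h4⟩
          funext p
          rw [h4 p (by omega), h0]
        · rintro rfl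
          exact ⟨rfl, fun p hp => by omega, fun p _ => h.1, h.2, fun p _ => rfl⟩
      rw [this, cnt, if_pos h]
      exact ⟨Set.finite_singleton _, Set.ncard_singleton _⟩
    · have : QS S E 0 a = ∅ := by
        ext g
        simp only [Set.mem_empty_iff_false, iff_false]
        rintro ⟨h0, h1, h2, h3, h4⟩
        exact h ⟨h0 ▸ h2 0 le_rfl, h0 ▸ h3⟩
      rw [this, cnt, if_neg h]
      exact ⟨Set.finite_empty, Set.ncard_empty _⟩
  | succ L ih =>
    by_cases h : S a
    · rw [QS_succ S E L a h, cnt, if_pos h]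
      have f1 := (ih (a + 1)).1.image (consP a)
      have f2 := (ih (a - 1)).1.image (consP a)
      refine ⟨f1.union f2, ?_⟩
      rw [Set.ncard_union_eq _ f1 f2, Set.ncard_image_of_injective _ (consP_inj a),
        Set.ncard_image_of_injective _ (consP_inj a), (ih _).2, (ih _).2]
      rw [Set.disjoint_left]
      rintro _ ⟨g, hg, rfl⟩ ⟨g', hg', e⟩
      have := congrFun e 1
      simp only [consP] at this
      have := hg.1
      have := hg'.1
      omega
    · have : QS S E (L + 1) a = ∅ := by
        ext g
        simp only [Set.mem_empty_iff_false, iff_false]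
        rintro ⟨h0, h1, h2, h3, h4⟩
        exact h (h0 ▸ h2 0 (by omega))
      rw [this, cnt, if_neg h]
      exact ⟨Set.finite_empty, Set.ncard_empty _⟩

def wk : ℕ → ℤ → ℕ
  | 0, y => if y = 0 then 1 else 0
  | L + 1, y => wk L (y + 1) + wk L (y - 1)

lemma wk_neg (L : ℕ) (y : ℤ) : wk L (-y) = wk L y := by
  induction L generalizing y with
  | zero => simp [wk]
  | succ L ih =>
    rw [wk, wk, ← ih (y + 1), ← ih (y - 1), add_comm]
    congr 2 <;> ring

lemma wk_zero (L : ℕ) (y : ℤ) (hy : y < -L) : wk L y = 0 := by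
  induction L generalizing y with
  | zero => rw [wk, if_neg]; push_cast at hy; omega
  | succ L ih => rw [wk, ih, ih] <;> push_cast at hy <;> omega

lemma wk_par (L : ℕ) (y : ℤ) (hy : (y - L) % 2 = 1) : wk L y = 0 := by
  induction L generalizing y with
  | zero => rw [wk, if_neg]; push_cast at hy; omega
  | succ L ih => rw [wk, ih, ih] <;> push_cast at hy <;> omega

lemma wk_choose (L i : ℕ) : wk L (2 * i - L) = L.choose i := by
  induction L generalizing i with
  | zero =>
    cases i with
    | zero => simp [wk]
    | succ i => rw [wk, if_neg (by push_cast; omega)]; simp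
  | succ L ih =>
    rw [wk]
    rw [show (2 * (i:ℤ) - (L + 1 : ℕ) + 1) = 2 * i - L by push_cast; ring, ih]
    cases i with
    | zero => rw [wk_zero L _ (by push_cast; omega)]; simp
    | succ i =>
      rw [show (2 * ((i + 1 : ℕ):ℤ) - (L + 1 : ℕ) - 1) = 2 * i - L by push_cast; ring, ih,
        Nat.choose_succ_succ, add_comm]

lemma cnt_free (L : ℕ) (a : ℤ) : cnt (fun _ => True) (fun y => y = 0) L a = wk L a := by
  induction L generalizing a with
  | zero => simp [cnt, wk]
  | succ L ih => rw [cnt, if_pos trivial, wk, ih, ih]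

lemma cnt_dyck (L : ℕ) (a : ℤ) (ha : -1 ≤ a) :
    (cnt (fun y => 0 ≤ y) (fun y => y = 0) L a : ℤ) = wk L a - wk L (a + 2) := by
  induction L generalizing a with
  | zero =>
    simp only [cnt, wk]
    by_cases h : a = 0
    · simp [h]
    · rw [if_neg (by simp [h]), if_neg h]
      by_cases h2 : a + 2 = 0
      · omega
      · simp [h2]
  | succ L ih =>
    rcases eq_or_lt_of_le ha with rfl | h
    · rw [cnt, if_neg (by norm_num)]
      have := wk_neg (L + 1) 1
      norm_num [this]
    · rw [cnt, if_pos (by omega), Nat.cast_add, ih _ (by omega), ih _ (by omega), wk, wk]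
      rw [show a + 1 + 2 = a + 2 + 1 by ring, show a - 1 + 2 = a + 2 - 1 by ring]
      push_cast
      ring

def GS (L b : ℕ) : ℕ := ∑ i ∈ Finset.range b, (wk L (-i) + wk L (i + 1))

lemma GS_rec (L b : ℕ) : GS (L + 1) (b + 1) = GS L (b + 2) + GS L b := by
  induction b with
  | zero =>
    simp [GS, Finset.sum_range_succ, wk]
    norm_num
    ring
  | succ b ih =>
    have e : ∀ L b, GS L (b + 1) = GS L b + (wk L (-b) + wk L (b + 1)) := fun L b => by
      rw [GS, Finset.sum_range_succ, ← GS]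
    rw [e (L + 1) (b + 1), ih, e L (b + 2), e L b, wk, wk]
    push_cast
    rw [show (-((b:ℤ) + 1) + 1) = -b by ring, show ((b:ℤ) + 1 + 1 - 1) = b + 1 by ring,
      show (-((b:ℤ) + 1) - 1) = -(b+2) by ring]
    rw [show ((b:ℤ) + 1 + 1 + 1) = b + 2 + 1 by ring]
    ring

lemma cnt_prefix (L b : ℕ) :
    cnt (fun y => 0 ≤ y) (fun _ => True) L ((b : ℤ) - 1) = GS L b := by
  induction L generalizing b with
  | zero =>
    cases b with
    | zero => simp [cnt, GS]
    | succ b =>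
      rw [cnt, if_pos (by push_cast; simp), GS, Finset.sum_eq_single 0]
      · simp [wk]
      · intro i _ hi
        simp only [wk]
        rw [if_neg (by omega), if_neg (by omega)]; rfl
      · simp
  | succ L ih =>
    cases b with
    | zero => simp [cnt, GS]
    | succ b =>
      rw [cnt, if_pos (by push_cast; simp), GS_rec, ← ih, ← ih]
      congr 2 <;> push_cast <;> ring

lemma count_free (k : ℕ) : cnt (fun _ => True) (fun y => y = 0) (2 * k) 0 = (2 * k).choose k := by
  rw [cnt_free, ← wk_choose]; congr 1; push_cast; ring

lemma count_dyck (n : ℕ) : cnt (fun y => 0 ≤ y) (fun y => y = 0) (2 * n) 0 = catalan n := by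
  have h := cnt_dyck (2 * n) 0 (by norm_num)
  have h1 := wk_choose (2 * n) n
  have h2 := wk_choose (2 * n) (n + 1)
  rw [show (2 * (n:ℤ) - (2 * n : ℕ)) = 0 by push_cast; ring] at h1
  rw [show (2 * ((n + 1 : ℕ):ℤ) - (2 * n : ℕ)) = 0 + 2 by push_cast; ring] at h2
  rw [h1, h2] at h
  have h3 := Nat.choose_succ_right_eq (2 * n) n
  rw [show 2 * n - n = n by omega] at h3
  have h4 := succ_mul_catalan_eq_centralBinom n
  rw [Nat.centralBinom] at h4
  have h3' : ((2 * n).choose (n + 1) : ℤ) * (n + 1) = (2 * n).choose n * n := by exact_mod_cast h3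
  have h4' : ((n : ℤ) + 1) * catalan n = (2 * n).choose n := by exact_mod_cast h4
  have : (cnt (fun y => 0 ≤ y) (fun y => y = 0) (2 * n) 0 : ℤ) = catalan n := by
    apply mul_left_cancel₀ (show (n + 1 : ℤ) ≠ 0 by positivity)
    rw [h, h4']
    linear_combination -h3'
  exact_mod_cast this

lemma count_prefix (m : ℕ) :
    cnt (fun y => 0 ≤ y) (fun _ => True) (2 * m + 1) 0 = (2 * m + 1).choose m := by
  have h := cnt_prefix (2 * m + 1) 1
  simp only [Nat.cast_one, sub_self] at h
  rw [h, GS, Finset.sum_range_one, wk_par _ _ (by push_cast; omega)]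
  have h1 := wk_choose (2 * m + 1) m
  rw [← wk_neg] at h1
  rw [← h1, zero_add]; congr 1; push_cast; ring

lemma card_path (N : ℕ) (hN : 0 < N) (S : ℤ → Prop) :
    Nat.card {h : ℤ → ℤ // IsPath N h ∧ ∀ p, S (h p)} = cnt S (fun y => y = 0) (2 * N) 0 := by
  rw [← (QS_card S _ (2 * N) 0).2, ← Nat.card_coe_set_eq]
  apply Nat.card_congr
  refine Equiv.ofBijective (fun h => ⟨fun p => h.1 ((min p (2 * N) : ℕ) : ℤ), ?_⟩) ⟨?_, ?_⟩
  · obtain ⟨h, hh, hS⟩ := h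
    have hend : h ((2 * N : ℕ) : ℤ) = 0 := by
      rw [← hh.1, ← hh.2.2 0]; congr 1; push_cast; ring
    refine ⟨by simpa using hh.1, fun p hp => ?_, fun p hp => hS _, by simpa using hend,
      fun p hp => ?_⟩
    · simp only
      rw [min_eq_left (by omega), min_eq_left (by omega)]
      push_cast
      exact hh.2.1 p
    · simp only
      rw [min_eq_right hp, min_self]
  · rintro ⟨h, hh, hS⟩ ⟨h', hh', hS'⟩ e
    simp only [Subtype.mk.injEq] at e ⊢
    funext p
    have hm := Int.emod_nonneg p (show (2 * N : ℤ) ≠ 0 by omega)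
    have hm' := Int.emod_lt_of_pos p (show (0 : ℤ) < 2 * N by omega)
    have hd := Int.emod_add_mul_ediv p (2 * N)
    have h1 := path_periods hh (p / (2 * N)) (p % (2 * N))
    have h2 := path_periods hh' (p / (2 * N)) (p % (2 * N))
    rw [mul_comm (p / (2 * (N:ℤ))), hd] at h1 h2
    rw [h1, h2]
    have := congrFun e (p % (2 * N)).toNat
    rw [min_eq_left (by omega), Int.toNat_of_nonneg hm] at this
    exact this
  · rintro ⟨g, h0, h1, h2, h3, h4⟩
    have hM : (0 : ℤ) < 2 * N := by omega
    refine ⟨⟨fun p => g (p % (2 * N)).toNat, ⟨by simpa using h0, fun p => ?_, fun p => ?_⟩, fun p => ?_⟩, ?_⟩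
    · simp only
      have hm := Int.emod_nonneg p hM.ne'
      have hm' := Int.emod_lt_of_pos p hM
      have hd := Int.emod_add_mul_ediv p (2 * N)
      set r := p % (2 * (N:ℤ)) with hr
      have e : (p + 1) % (2 * (N:ℤ)) = if r + 1 = 2 * N then 0 else r + 1 := by
        rw [Int.add_emod, ← hr]
        split_ifs with hc
        · rcases eq_or_lt_of_le (show (1 : ℤ) ≤ 2 * N - 1 by omega) with h | h
          · rw [Int.emod_eq_of_lt (by omega : (0:ℤ) ≤ 1) (by omega), hc, Int.emod_self]
          · rw [Int.emod_eq_of_lt (by omega : (0:ℤ) ≤ 1) (by omega), hc, Int.emod_self]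
        · rw [Int.emod_eq_of_lt (by omega : (0:ℤ) ≤ 1) (by omega), Int.emod_eq_of_lt (by omega) (by omega)]
      have s := h1 r.toNat (by omega)
      rw [e]
      split_ifs with hc
      · rw [show r.toNat + 1 = 2 * N by omega, h3] at s
        rw [Int.toNat_zero, h0]
        exact s
      · rw [show (r + 1).toNat = r.toNat + 1 by omega]
        exact s
    · simp
    · have hm := Int.emod_nonneg p hM.ne'
      have hm' := Int.emod_lt_of_pos p hM
      exact h2 _ (by omega)
    · apply Subtype.ext
      funext p
      simp only
      rcases lt_or_ge p (2 * N) with hp | hp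
      · rw [min_eq_left hp.le, Int.emod_eq_of_lt (by omega) (by omega), Int.toNat_natCast]
      · rw [min_eq_right hp, h4 p hp, h3]
        push_cast
        simpa using h0

lemma card_path_symm (N : ℕ) (hN : 0 < N) :
    Nat.card {h : ℤ → ℤ // IsPath N h ∧ (∀ p, 0 ≤ h p) ∧ ∀ p, h (-p) = h p}
      = cnt (fun y => 0 ≤ y) (fun _ => True) N 0 := by
  have hM : (0 : ℤ) < 2 * N := by omega
  have red : ∀ h : ℤ → ℤ, IsPath N h → (∀ p, h (-p) = h p) → ∀ p,
      h p = h (min (p % (2 * N)) (2 * N - p % (2 * N))) := by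
    intro h hh hs p
    have hd := Int.emod_add_mul_ediv p (2 * N)
    have h1 := path_periods hh (p / (2 * N)) (p % (2 * N))
    rw [mul_comm (p / (2 * (N:ℤ))), hd] at h1
    rw [h1]
    rcases min_choice (p % (2 * (N:ℤ))) (2 * N - p % (2 * N)) with e | e
    · rw [e]
    · rw [e, ← hs, ← hh.2.2]; congr 1; ring
  rw [← (QS_card (fun y => 0 ≤ y) (fun _ => True) N 0).2, ← Nat.card_coe_set_eq]
  apply Nat.card_congr
  refine Equiv.ofBijective (fun h => ⟨fun p => h.1 ((min p N : ℕ) : ℤ), ?_⟩) ⟨?_, ?_⟩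
  · obtain ⟨h, hh, hS, hs⟩ := h
    refine ⟨by simpa using hh.1, fun p hp => ?_, fun p hp => hS _, trivial,
      fun p hp => ?_⟩
    · simp only
      rw [min_eq_left (by omega), min_eq_left (by omega)]
      push_cast
      exact hh.2.1 p
    · simp only
      rw [min_eq_right hp, min_self]
  · rintro ⟨h, hh, hS, hs⟩ ⟨h', hh', hS', hs'⟩ e
    simp only [Subtype.mk.injEq] at e ⊢
    funext p
    have hm := Int.emod_nonneg p hM.ne'
    have hm' := Int.emod_lt_of_pos p hM
    rw [red h hh hs, red h' hh' hs']
    have := congrFun e (min (p % (2 * N)) (2 * N - p % (2 * N))).toNat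
    rw [min_eq_left (by omega), Int.toNat_of_nonneg (by omega)] at this
    exact this
  · rintro ⟨g, h0, h1, h2, h3, h4⟩
    have es : ∀ p : ℤ, (p + 1) % (2 * (N:ℤ)) = if p % (2 * N) + 1 = 2 * N then 0 else p % (2 * N) + 1 := by
      intro p
      have hm := Int.emod_nonneg p hM.ne'
      have hm' := Int.emod_lt_of_pos p hM
      rw [Int.add_emod, Int.emod_eq_of_lt (by omega : (0:ℤ) ≤ 1) (by omega)]
      split_ifs with hc
      · rw [hc, Int.emod_self]
      · rw [Int.emod_eq_of_lt (by omega) (by omega)]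
    have en : ∀ p : ℤ, (-p) % (2 * (N:ℤ)) = if p % (2 * N) = 0 then 0 else 2 * N - p % (2 * N) := by
      intro p
      have hm := Int.emod_nonneg p hM.ne'
      have hm' := Int.emod_lt_of_pos p hM
      have hd := Int.emod_add_mul_ediv p (2 * N)
      split_ifs with hc
      · exact Int.emod_eq_zero_of_dvd ((dvd_neg).2 (Int.dvd_of_emod_eq_zero hc))
      · rw [show -p = (2 * N - p % (2 * N)) + (2 * N) * (-1 - p / (2 * N)) by linear_combination hd,
          Int.add_mul_emod_self_left, Int.emod_eq_of_lt (by omega) (by omega)]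
    refine ⟨⟨fun p => g (min (p % (2 * N)) (2 * N - p % (2 * N))).toNat,
      ⟨?_, fun p => ?_, fun p => ?_⟩, fun p => ?_, fun p => ?_⟩, ?_⟩
    · simp [h0]
    · simp only
      have hm := Int.emod_nonneg p hM.ne'
      have hm' := Int.emod_lt_of_pos p hM
      rw [es]
      set r := p % (2 * (N:ℤ)) with hr
      rcases lt_or_ge r N with hrN | hrN
      · have s := h1 r.toNat (by omega)
        rw [if_neg (by omega), show (min (r + 1) (2 * (N:ℤ) - (r + 1))).toNat = r.toNat + 1 by omega,
          show (min r (2 * (N:ℤ) - r)).toNat = r.toNat by omega]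
        exact s
      · have s := h1 (2 * (N:ℤ) - r - 1).toNat (by omega)
        rw [show (2 * (N:ℤ) - r - 1).toNat + 1 = (min r (2 * (N:ℤ) - r)).toNat by omega] at s
        have e2 : (min (if r + 1 = 2 * (N:ℤ) then 0 else r + 1)
            (2 * (N:ℤ) - (if r + 1 = 2 * (N:ℤ) then 0 else r + 1))).toNat = (2 * (N:ℤ) - r - 1).toNat := by
          split_ifs <;> omega
        rw [e2]
        omega
    · simp
    · have hm := Int.emod_nonneg p hM.ne'
      have hm' := Int.emod_lt_of_pos p hM
      exact h2 _ (by omega)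
    · simp only
      have hm := Int.emod_nonneg p hM.ne'
      rw [en]
      split_ifs with hc
      · rw [hc]
      · congr 2
        omega
    · apply Subtype.ext
      funext p
      simp only
      have : (((min p N : ℕ) : ℤ)) % (2 * N) = (min p N : ℕ) := Int.emod_eq_of_lt (by omega) (by omega)
      rw [this]
      rcases lt_or_ge p N with hp | hp
      · rw [min_eq_left hp.le]; congr 1; omega
      · rw [min_eq_right hp, h4 p hp]; congr 1; omega

end count


section fin
variable {n : ℕ} [NeZero n]

def NCZ (r : Setoid (ZMod n)) : Prop :=
  ∀ a b c d : ZMod n, a.val < b.val → b.val < c.val → c.val < d.val → r a c → r b d → r a b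

lemma part_mem' (π : Finpartition (Finset.univ : Finset (ZMod n))) (x : ZMod n) :
    π.part x ∈ π.parts := π.part_mem.2 (Finset.mem_univ x)

lemma mem_part_iff' (π : Finpartition (Finset.univ : Finset (ZMod n))) (x y : ZMod n) :
    y ∈ π.part x ↔ π.part y = π.part x :=
  π.mem_part_iff_part_eq_part (Finset.mem_univ y) (Finset.mem_univ x)

lemma parts_eq_part (π : Finpartition (Finset.univ : Finset (ZMod n))) {B : Finset (ZMod n)}
    (hB : B ∈ π.parts) : ∃ x, B = π.part x := by
  obtain ⟨x, hx⟩ := π.nonempty_of_mem_parts hB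
  exact ⟨x, (π.part_eq_of_mem hB hx).symm⟩

lemma nc_iff (π : Finpartition (Finset.univ : Finset (ZMod n))) :
    IsNoncrossing π ↔ NCZ (Setoid.ker π.part) := by
  constructor
  · intro h a b c d hab hbc hcd hac hbd
    by_contra hne
    refine h ⟨a, b, c, d, π.part a, π.part b, part_mem' π a, part_mem' π b, hne, ?_, ?_, ?_, ?_,
      hab, hbc, hcd⟩
    · rw [mem_part_iff']
    · rw [mem_part_iff']; exact hac.symm
    · rw [mem_part_iff']
    · rw [mem_part_iff']; exact hbd.symm
  · rintro h ⟨a, b, c, d, B₁, B₂, h1, h2, hne, ha, hc, hb, hd, hab, hbc, hcd⟩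
    apply hne
    have e := h a b c d hab hbc hcd
      ((π.part_eq_of_mem h1 ha).trans (π.part_eq_of_mem h1 hc).symm)
      ((π.part_eq_of_mem h2 hb).trans (π.part_eq_of_mem h2 hd).symm)
    rw [← π.part_eq_of_mem h1 ha, ← π.part_eq_of_mem h2 hb]
    exact e

lemma inv_iff (π : Finpartition (Finset.univ : Finset (ZMod n))) (f : ZMod n → ZMod n)
    (hf : Function.Bijective f) :
    π.parts.image (Finset.image f) = π.parts ↔
      ∀ x y, Setoid.ker π.part (f x) (f y) ↔ Setoid.ker π.part x y := by
  constructor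
  · intro h x y
    constructor
    · intro hr
      have hB := part_mem' π (f x)
      rw [← h, Finset.mem_image] at hB
      obtain ⟨B, hB, e⟩ := hB
      have hx : f x ∈ B.image f := by rw [e, mem_part_iff']
      have hy : f y ∈ B.image f := by rw [e, mem_part_iff']; exact hr.symm
      rw [hf.1.mem_finset_image] at hx hy
      exact (π.part_eq_of_mem hB hx).trans (π.part_eq_of_mem hB hy).symm
    · intro hr
      have hB : (π.part x).image f ∈ π.parts := by
        rw [← h]; exact Finset.mem_image_of_mem _ (part_mem' π x)
      have hx : f x ∈ (π.part x).image f := by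
        rw [hf.1.mem_finset_image, mem_part_iff']
      have hy : f y ∈ (π.part x).image f := by
        rw [hf.1.mem_finset_image, mem_part_iff']; exact hr.symm
      exact (π.part_eq_of_mem hB hx).trans (π.part_eq_of_mem hB hy).symm
  · intro h
    have key : ∀ x, (π.part x).image f = π.part (f x) := by
      intro x
      ext z
      obtain ⟨w, rfl⟩ := hf.2 z
      rw [hf.1.mem_finset_image, mem_part_iff', mem_part_iff']
      exact (h w x).symm
    ext B
    rw [Finset.mem_image]
    constructor
    · rintro ⟨B, hB, rfl⟩
      obtain ⟨x, rfl⟩ := parts_eq_part π hB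
      rw [key]; exact part_mem' π _
    · intro hB
      obtain ⟨x, rfl⟩ := parts_eq_part π hB
      obtain ⟨w, rfl⟩ := hf.2 x
      exact ⟨π.part w, part_mem' π w, key w⟩

lemma card_fin (f : ZMod n → ZMod n) (hf : Function.Bijective f) :
    Nat.card {π : Finpartition (Finset.univ : Finset (ZMod n)) //
            IsNoncrossing π ∧ π.parts.image (Finset.image f) = π.parts} =
    Nat.card {r : Setoid (ZMod n) // NCZ r ∧ ∀ x y, r (f x) (f y) ↔ r x y} := by
  classical
  apply Nat.card_congr
  refine Equiv.ofBijective (fun π => ⟨Setoid.ker π.1.part, (nc_iff _).1 π.2.1,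
    (inv_iff _ f hf).1 π.2.2⟩) ⟨?_, ?_⟩
  · rintro ⟨π, h1, h2⟩ ⟨π', h1', h2'⟩ e
    simp only [Subtype.mk.injEq] at e ⊢
    have hp : ∀ x, π.part x = π'.part x := by
      intro x
      ext y
      rw [mem_part_iff', mem_part_iff']
      have := congrArg (fun r : Setoid (ZMod n) => r y x) e
      exact iff_of_eq this
    apply Finpartition.ext
    ext B
    constructor
    · intro hB
      obtain ⟨x, rfl⟩ := parts_eq_part π hB
      rw [hp]; exact part_mem' _ _
    · intro hB
      obtain ⟨x, rfl⟩ := parts_eq_part π' hB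
      rw [← hp]; exact part_mem' _ _
  · rintro ⟨r, h1, h2⟩
    have e : Setoid.ker (Finpartition.ofSetoid r).part = r := by
      ext x y
      have h1 := Finpartition.mem_part_ofSetoid_iff_rel (s := r) (a := y) (b := x)
      rw [mem_part_iff'] at h1
      exact h1.trans ⟨fun h => Setoid.symm' _ h, fun h => Setoid.symm' _ h⟩
    refine ⟨⟨Finpartition.ofSetoid r, (nc_iff _).2 (by rw [e]; exact h1),
      (inv_iff _ f hf).2 (by rw [e]; exact h2)⟩, Subtype.ext e⟩

/-- cyclic noncrossing -/
lemma ncz_cyc {r : Setoid (ZMod n)} (hr : NCZ r) (a b c d : ℤ) (hab : a < b) (hbc : b < c)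
    (hcd : c < d) (hd : d < a + n) (h1 : r (a : ZMod n) (c : ZMod n))
    (h2 : r (b : ZMod n) (d : ZMod n)) : r (a : ZMod n) (b : ZMod n) := by
  have hn : (0 : ℤ) < n := by exact_mod_cast Nat.pos_of_ne_zero (NeZero.ne n)
  -- core version
  have core : ∀ a b c d : ℤ, 0 ≤ a → a < b → b < c → c < d → d < n →
      r (a : ZMod n) (c : ZMod n) → r (b : ZMod n) (d : ZMod n) → r (a : ZMod n) (b : ZMod n) := by
    intro a b c d ha hab hbc hcd hd h1 h2
    have hv : ∀ z : ℤ, 0 ≤ z → z < n → (((z : ZMod n)).val : ℤ) = z := fun z h0 h1 => by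
      rw [ZMod.val_intCast, Int.emod_eq_of_lt h0 h1]
    have va := hv a (by omega) (by omega)
    have vb := hv b (by omega) (by omega)
    have vc := hv c (by omega) (by omega)
    have vd := hv d (by omega) (by omega)
    exact hr _ _ _ _ (by omega) (by omega) (by omega) h1 h2
  -- shift
  have hm := Int.emod_nonneg a hn.ne'
  have hm' := Int.emod_lt_of_pos a hn
  have hdm := Int.emod_add_mul_ediv a n
  set s : ℤ := n * (a / n) with hs
  have hcast : ∀ z : ℤ, ((z - s : ℤ) : ZMod n) = (z : ZMod n) := fun z => by simp [hs]
  have hcast2 : ∀ z : ℤ, ((z - s - n : ℤ) : ZMod n) = (z : ZMod n) := fun z => by simp [hs]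
  rcases lt_or_ge (d - s) n with h | hd'
  · have := core (a - s) (b - s) (c - s) (d - s) (by omega) (by omega) (by omega) (by omega) h
      (by rwa [hcast, hcast]) (by rwa [hcast, hcast])
    rwa [hcast, hcast] at this
  rcases lt_or_ge (c - s) n with h | hc'
  · have := core (d - s - n) (a - s) (b - s) (c - s) (by omega) (by omega) (by omega) (by omega) h
      (by rw [hcast2, hcast]; exact Setoid.symm' _ h2) (by rwa [hcast, hcast])
    rw [hcast, hcast2] at this
    exact Setoid.symm' _ (Setoid.trans' _ h2 this)
  rcases lt_or_ge (b - s) n with h | hb'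
  · have := core (c - s - n) (d - s - n) (a - s) (b - s) (by omega) (by omega) (by omega) (by omega) h
      (by rw [hcast2, hcast]; exact Setoid.symm' _ h1) (by rw [hcast2, hcast]; exact Setoid.symm' _ h2)
    rw [hcast2, hcast2] at this
    exact Setoid.trans' _ h1 (Setoid.trans' _ this (Setoid.symm' _ h2))
  · have := core (b - s - n) (c - s - n) (d - s - n) (a - s) (by omega) (by omega) (by omega) (by omega)
      (by omega) (by rwa [hcast2, hcast2]) (by rw [hcast2, hcast]; exact Setoid.symm' _ h1)
    rw [hcast2, hcast2] at this
    exact Setoid.trans' _ h1 (Setoid.symm' _ this)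

lemma ncz_of_cyc {r : Setoid (ZMod n)} (h : ∀ a b c d : ℤ, a < b → b < c → c < d → d < a + n →
    r (a : ZMod n) (c : ZMod n) → r (b : ZMod n) (d : ZMod n) → r (a : ZMod n) (b : ZMod n)) :
    NCZ r := by
  intro a b c d hab hbc hcd h1 h2
  have e : ∀ x : ZMod n, ((x.val : ℤ) : ZMod n) = x := fun x => by simp
  have := h a.val b.val c.val d.val (by omega) (by omega) (by omega)
    (by have := ZMod.val_lt d; omega) (by rwa [e, e]) (by rwa [e, e])
  rwa [e, e] at this

/-- linear lift -/
def linLift (r : Setoid (ZMod n)) : Setoid ℤ where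
  r x y := x / n = y / n ∧ r (x : ZMod n) (y : ZMod n)
  iseqv := ⟨fun _ => ⟨rfl, Setoid.refl' _ _⟩, fun h => ⟨h.1.symm, Setoid.symm' _ h.2⟩,
    fun h h' => ⟨h.1.trans h'.1, Setoid.trans' _ h.2 h'.2⟩⟩

lemma linLift_iff (r : Setoid (ZMod n)) (x y : ℤ) :
    linLift r x y ↔ x / n = y / n ∧ r (x : ZMod n) (y : ZMod n) := Iff.rfl

lemma card_lin (f : ZMod n → ZMod n) (g : ℤ → ℤ) (hfg : ∀ x : ℤ, ((g x : ℤ) : ZMod n) = f x)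
    (hg : ∀ x y : ℤ, g x / n = g y / n ↔ x / n = y / n) :
    Nat.card {r : Setoid (ZMod n) // NCZ r ∧ ∀ x y, r (f x) (f y) ↔ r x y} =
    Nat.card {T : Setoid ℤ // ENC n T ∧ (∀ x y, x < 0 → 0 ≤ y → ¬ T x y) ∧
      ∀ x y, T (g x) (g y) ↔ T x y} := by
  have hn : (0 : ℤ) < n := by exact_mod_cast Nat.pos_of_ne_zero (NeZero.ne n)
  have e : ∀ x : ZMod n, ((x.val : ℤ) : ZMod n) = x := fun x => by simp
  have ed : ∀ x : ZMod n, (x.val : ℤ) / n = 0 := fun x =>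
    Int.ediv_eq_zero_of_lt (by omega) (by have := ZMod.val_lt x; omega)
  apply Nat.card_congr
  refine Equiv.ofBijective (fun r => ⟨linLift r.1, ⟨?_, ?_⟩, ?_, ?_⟩) ⟨?_, ?_⟩
  · obtain ⟨r, h1, h2⟩ := r
    rintro a b c d hab hbc hcd ⟨e1, r1⟩ ⟨e2, r2⟩
    have i1 := Int.ediv_le_ediv hn hab.le
    have i2 := Int.ediv_le_ediv hn hbc.le
    have i3 := Int.ediv_le_ediv hn hcd.le
    refine ⟨by omega, ncz_cyc h1 a b c d hab hbc hcd ?_ r1 r2⟩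
    have j1 := Int.emod_add_mul_ediv a n
    have j2 := Int.emod_add_mul_ediv d n
    have k1 := Int.emod_nonneg a hn.ne'
    have k2 := Int.emod_lt_of_pos d hn
    have : a / n = d / n := by omega
    rw [this] at j1
    omega
  · intro x y
    simp only [linLift_iff]
    rw [Int.add_ediv_of_dvd_right (dvd_refl _), Int.add_ediv_of_dvd_right (dvd_refl _)]
    simp
  · rintro x y hx hy ⟨e1, -⟩
    have := Int.ediv_neg_of_neg_of_pos hx hn
    have := Int.ediv_nonneg hy hn.le
    omega
  · intro x y
    simp only [linLift_iff, hfg, hg, r.2.2]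
  · rintro ⟨r, h1, h2⟩ ⟨r', h1', h2'⟩ he
    simp only [Subtype.mk.injEq] at he ⊢
    ext x y
    have := iff_of_eq (congrArg (fun T : Setoid ℤ => T x.val y.val) he)
    simp only [linLift_iff, ed, e, true_and] at this
    exact this
  · rintro ⟨T, hT, hs, hi⟩
    have eL : linLift (T.comap (fun x : ZMod n => (x.val : ℤ))) = T := by
      have hval : ∀ x : ℤ, ((x : ZMod n).val : ℤ) = x + (-(x / n)) * n := fun x => by
        rw [ZMod.val_intCast]
        have := Int.emod_add_mul_ediv x n
        linear_combination this
      have hlt : ∀ x y : ℤ, x / n < y / n → ¬ T x y := by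
        intro x y hxy hr
        have hd1 := Int.emod_add_mul_ediv x n
        have hm1 := Int.emod_lt_of_pos x hn
        have hd2 := Int.emod_add_mul_ediv y n
        have hm2 := Int.emod_nonneg y hn.ne'
        refine hs (x + (-(y / n)) * n) (y + (-(y / n)) * n) ?_ ?_ ((enc_periods hT _ _ _).2 hr)
        · nlinarith
        · nlinarith
      ext x y
      rw [linLift_iff, Setoid.comap_rel, hval, hval]
      constructor
      · rintro ⟨e1, e2⟩
        rw [e1] at e2
        exact (enc_periods hT _ _ _).1 e2
      · intro h
        have e1 : x / n = y / n := by
          rcases lt_trichotomy (x / n) (y / n) with h' | h' | h'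
          · exact absurd h (hlt _ _ h')
          · exact h'
          · exact absurd (Setoid.symm' _ h) (hlt _ _ h')
        refine ⟨e1, ?_⟩
        rw [e1]
        exact (enc_periods hT _ _ _).2 h
    refine ⟨⟨T.comap (fun x : ZMod n => (x.val : ℤ)), ?_, ?_⟩, Subtype.ext eL⟩
    · intro a b c d hab hbc hcd h1 h2
      exact hT.1 _ _ _ _ (Int.ofNat_lt.2 hab) (Int.ofNat_lt.2 hbc) (Int.ofNat_lt.2 hcd) h1 h2
    · intro x y
      have h := hi x.val y.val
      rw [← eL] at h
      simp only [linLift_iff, hfg, hg, ed, e] at h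
      simpa using h

end fin


section rot
variable {n : ℕ} [NeZero n]

/-- rotation-invariant data -/
structure RotI (n : ℕ) [NeZero n] (k : ℤ) (r : Setoid (ZMod n)) : Prop where
  hk : 0 < k
  h2 : 2 * k ≤ n
  nc : NCZ r
  inv : ∀ x y : ℤ, r ((x + k : ℤ) : ZMod n) ((y + k : ℤ) : ZMod n) ↔ r (x : ZMod n) (y : ZMod n)

/-- central -/
def cen (k : ℤ) (r : Setoid (ZMod n)) (x : ℤ) : Prop :=
  r (x : ZMod n) ((x + k : ℤ) : ZMod n)

lemma RotI.invj {k : ℤ} {r : Setoid (ZMod n)} (H : RotI n k r) (j x y : ℤ) :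
    r ((x + j * k : ℤ) : ZMod n) ((y + j * k : ℤ) : ZMod n) ↔ r (x : ZMod n) (y : ZMod n) := by
  induction j using Int.induction_on with
  | zero => simp only [zero_mul, add_zero]
  | succ i ih =>
    rw [← ih, ← H.inv (x + i * k) (y + i * k)]
    ring_nf
  | pred i ih =>
    rw [← ih, ← H.inv (x + (-i - 1) * k) (y + (-i - 1) * k)]
    ring_nf

lemma RotI.cen_shift {k : ℤ} {r : Setoid (ZMod n)} (H : RotI n k r) (j x : ℤ) :
    cen k r (x + j * k) ↔ cen k r x := by
  have := H.invj j x (x + k)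
  unfold cen
  rw [← this, show x + j * k + k = x + k + j * k by ring]

lemma RotI.cen_rel {k : ℤ} {r : Setoid (ZMod n)} (H : RotI n k r) {x : ℤ} (h : cen k r x) (j : ℤ) :
    r (x : ZMod n) ((x + j * k : ℤ) : ZMod n) := by
  induction j using Int.induction_on with
  | zero => simp only [zero_mul, add_zero]; exact Setoid.refl' _ _
  | succ i ih =>
    refine Setoid.trans' _ ih ?_
    have := (H.cen_shift i x).2 h
    unfold cen at this
    rwa [show x + ((i : ℤ) + 1) * k = x + i * k + k by ring]
  | pred i ih =>
    refine Setoid.trans' _ ih (Setoid.symm' _ ?_)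
    have := (H.cen_shift (-i - 1) x).2 h
    unfold cen at this
    rwa [show x + (-(i : ℤ) - 1) * k + k = x + (-i) * k by ring] at this

lemma RotI.cen_of {k : ℤ} {r : Setoid (ZMod n)} (H : RotI n k r) {x y : ℤ}
    (h : r (x : ZMod n) (y : ZMod n)) : cen k r x ↔ cen k r y := by
  have h' := (H.inv x y).2 h
  unfold cen
  constructor
  · intro hx
    exact Setoid.trans' _ (Setoid.symm' _ h) (Setoid.trans' _ hx h')
  · intro hx
    exact Setoid.trans' _ h (Setoid.trans' _ hx (Setoid.symm' _ h'))

/-- key fact: relation at distance between k and n - k is central -/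
lemma RotI.far {k : ℤ} {r : Setoid (ZMod n)} (H : RotI n k r) {x y : ℤ}
    (h : r (x : ZMod n) (y : ZMod n)) (h1 : x + k ≤ y) (h2 : y + k ≤ x + n) : cen k r x := by
  rcases h1.eq_or_lt with e | h1
  · unfold cen; rwa [e]
  rcases h2.eq_or_lt with e | h2
  · have hc : cen k r y := by
      unfold cen
      rw [e]
      refine Setoid.symm' _ ?_
      push_cast
      simpa using h
    exact (H.cen_of h).2 hc
  · exact ncz_cyc H.nc x (x + k) y (y + k) (by have := H.hk; omega) h1 (by have := H.hk; omega) h2 h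
      ((H.inv x y).2 h)

lemma RotI.tr {k : ℤ} {r : Setoid (ZMod n)} (H : RotI n k r) {x y z : ℤ}
    (h1 : r (x : ZMod n) (y : ZMod n)) (h2 : r (y : ZMod n) (z : ZMod n))
    (d1 : |x - y| < k) (d2 : |y - z| < k) : |x - z| < k ∨ cen k r x := by
  have := H.hk
  have h3 := H.h2
  have key : ∀ x y z : ℤ, r (x : ZMod n) (y : ZMod n) → r (y : ZMod n) (z : ZMod n) →
      |x - y| < k → |y - z| < k → x + k ≤ z → cen k r x := by
    intro x y z h1 h2 d1 d2 hz
    rw [abs_lt] at d1 d2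
    rcases hz.eq_or_lt with e | hz
    · unfold cen; rw [e]; exact Setoid.trans' _ h1 h2
    · exact ncz_cyc H.nc x (x + k) z (y + k) (by omega) (by omega) (by omega) (by omega)
        (Setoid.trans' _ h1 h2) ((H.inv x y).2 h1)
  by_cases hz : |x - z| < k
  · exact Or.inl hz
  right
  rcases le_total x z with hxz | hxz
  · rw [abs_of_nonpos (by omega)] at hz
    exact key x y z h1 h2 d1 d2 (by omega)
  · rw [abs_of_nonneg (by omega)] at hz
    have := key z y x (Setoid.symm' _ h2) (Setoid.symm' _ h1) (by rwa [abs_sub_comm])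
      (by rwa [abs_sub_comm]) (by omega)
    exact (H.cen_of (Setoid.trans' _ h1 h2)).2 this

def rotLift (k : ℤ) (r : Setoid (ZMod n)) (H : RotI n k r) : Setoid ℤ where
  r x y := r (x : ZMod n) (y : ZMod n) ∧ (|x - y| < k ∨ cen k r x)
  iseqv := ⟨fun x => ⟨Setoid.refl' _ _, Or.inl (by simpa using H.hk)⟩,
    fun {x y} h => ⟨Setoid.symm' _ h.1, h.2.imp (fun h => by rwa [abs_sub_comm])
      (fun h' => (H.cen_of h.1).1 h')⟩,
    fun {x y z} h h' => ⟨Setoid.trans' _ h.1 h'.1, by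
      rcases h.2 with h2 | h2
      · rcases h'.2 with h2' | h2'
        · exact H.tr h.1 h'.1 h2 h2'
        · exact Or.inr ((H.cen_of h.1).2 h2')
      · exact Or.inr h2⟩⟩

lemma rotLift_iff (k : ℤ) (r : Setoid (ZMod n)) (H : RotI n k r) (x y : ℤ) :
    rotLift k r H x y ↔ r (x : ZMod n) (y : ZMod n) ∧ (|x - y| < k ∨ cen k r x) := Iff.rfl

lemma rotLift_enc (k : ℤ) (r : Setoid (ZMod n)) (H : RotI n k r) : ENC k (rotLift k r H) := by
  have hk := H.hk
  have hn2 := H.h2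
  constructor
  · intro a b c d hab hbc hcd h1 h2
    rw [rotLift_iff] at h1 h2 ⊢
    obtain ⟨r1, c1⟩ := h1
    obtain ⟨r2, c2⟩ := h2
    suffices hs : r (a : ZMod n) (b : ZMod n) by
      refine ⟨hs, ?_⟩
      rcases c1 with c1 | c1
      · left
        rw [abs_lt] at c1 ⊢
        omega
      · exact Or.inr c1
    by_cases ca : cen k r a
    · by_cases cb : cen k r b
      · set j : ℤ := (b - a) / k
        have e1 := Int.emod_add_mul_ediv (b - a) k
        have e2 := Int.emod_nonneg (b - a) hk.ne'
        have e3 := Int.emod_lt_of_pos (b - a) hk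
        have hb' := H.cen_rel cb (-j)
        have cb' := (H.cen_of hb').1 cb
        have e4 : b + -j * k = a + (b - a) % k := by
          have : (b - a) % k = b - a - k * j := by linarith
          rw [this]; ring
        rw [e4] at hb' cb'
        refine Setoid.trans' _ ?_ (Setoid.symm' _ hb')
        rcases e2.eq_or_lt with e0 | e0
        · rw [← e0, add_zero]
        · refine ncz_cyc H.nc a _ (a + k) (a + (b - a) % k + k) (by omega) (by omega) (by omega)
            (by omega) ca cb'
      · have c2' : |b - d| < k := c2.resolve_right cb
        rw [abs_lt] at c2'
        have cc := (H.cen_of r1).1 ca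
        have cc' := H.cen_rel cc (-1)
        have e : c + -1 * k = c - k := by ring
        rw [e] at cc'
        rcases le_or_gt b (c - k) with hh | hh
        · omega
        have := ncz_cyc H.nc (c - k) b c d (by omega) (by omega) (by omega) (by omega)
          (Setoid.symm' _ cc') r2
        exact Setoid.trans' _ r1 (Setoid.trans' _ cc' this)
    · have c1' : |a - c| < k := c1.resolve_right ca
      rw [abs_lt] at c1'
      by_cases cb : cen k r b
      · exact ncz_cyc H.nc a b c (b + k) (by omega) (by omega) (by omega) (by omega) r1 cb
      · have c2' : |b - d| < k := c2.resolve_right cb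
        rw [abs_lt] at c2'
        exact ncz_cyc H.nc a b c d (by omega) (by omega) (by omega) (by omega) r1 r2
  · intro x y
    rw [rotLift_iff, rotLift_iff, H.inv]
    have := H.cen_shift 1 x
    rw [one_mul] at this
    rw [this]
    simp

end rot

section down
lemma enc_far {k : ℤ} (hk : 0 < k) {T : Setoid ℤ} (hT : ENC k T) {x z : ℤ} (h : T x z) :
    |x - z| < k ∨ T x (x + k) := by
  have key : ∀ x z : ℤ, T x z → x + k ≤ z → T x (x + k) := by
    intro x z h hz
    rcases hz.eq_or_lt with e | hz
    · rwa [e]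
    · exact hT.1 x (x + k) z (z + k) (by omega) hz (by omega) h ((hT.2 x z).2 h)
  by_cases hz : |x - z| < k
  · exact Or.inl hz
  right
  rcases le_total x z with hxz | hxz
  · rw [abs_of_nonpos (by omega)] at hz
    exact key x z h (by omega)
  · rw [abs_of_nonneg (by omega)] at hz
    have := key z x (Setoid.symm' _ h) (by omega)
    exact Setoid.trans' _ h (Setoid.trans' _ this ((hT.2 z x).2 (Setoid.symm' _ h)))

lemma enc_cen {k : ℤ} {T : Setoid ℤ} (hT : ENC k T) {x : ℤ} (h : T x (x + k)) (j : ℤ) :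
    T x (x + j * k) := by
  induction j using Int.induction_on with
  | zero => simp only [zero_mul, add_zero]; exact Setoid.refl' _ _
  | succ i ih =>
    refine Setoid.trans' _ ih ?_
    have := (enc_periods hT i x (x + k)).2 h
    rwa [show x + ((i : ℤ) + 1) * k = x + k + i * k by ring]
  | pred i ih =>
    refine Setoid.trans' _ ih (Setoid.symm' _ ?_)
    have := (enc_periods hT (-i - 1) x (x + k)).2 h
    rwa [show x + k + (-(i : ℤ) - 1) * k = x + (-i) * k by ring] at this

variable {n : ℕ} [NeZero n]

lemma zmod_lift (x y : ℤ) (h : (x : ZMod n) = (y : ZMod n)) : ∃ j : ℤ, y = x + j * n := by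
  have := (ZMod.intCast_eq_intCast_iff_dvd_sub x y n).1 h
  obtain ⟨j, hj⟩ := this
  exact ⟨j, by linear_combination hj⟩

def rotDown (T : Setoid ℤ) (hT : ENC n T) : Setoid (ZMod n) where
  r p q := ∃ x y : ℤ, (x : ZMod n) = p ∧ (y : ZMod n) = q ∧ T x y
  iseqv := ⟨fun p => ⟨p.val, p.val, by simp, by simp, Setoid.refl' _ _⟩,
    fun ⟨x, y, h1, h2, h3⟩ => ⟨y, x, h2, h1, Setoid.symm' _ h3⟩,
    fun {p q s} ⟨x, y, h1, h2, h3⟩ ⟨x', y', h1', h2', h3'⟩ => by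
      obtain ⟨j, hj⟩ := zmod_lift y x' (h2.trans h1'.symm)
      refine ⟨x + j * n, y', by simpa using h1, h2', ?_⟩
      refine Setoid.trans' _ ((enc_periods hT j _ _).2 h3) ?_
      rwa [← hj]⟩

lemma rotDown_iff (T : Setoid ℤ) (hT : ENC n T) (x y : ℤ) :
    rotDown T hT (x : ZMod n) (y : ZMod n) ↔ ∃ j : ℤ, T x (y + j * n) := by
  constructor
  · rintro ⟨x', y', h1, h2, h3⟩
    obtain ⟨i, hi⟩ := zmod_lift x' x h1
    obtain ⟨j, hj⟩ := zmod_lift y y' h2.symm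
    refine ⟨j + i, ?_⟩
    have := (enc_periods hT i _ _).2 h3
    rw [← hi, hj] at this
    rwa [show y + (j + i) * (n : ℤ) = y + j * n + i * n by ring]
  · rintro ⟨j, hj⟩
    exact ⟨x, y + j * n, rfl, by simp, hj⟩

lemma enc_mul {k : ℤ} {T : Setoid ℤ} (hT : ENC k T) (d : ℤ) : ENC (d * k) T :=
  ⟨hT.1, fun x y => enc_periods hT d x y⟩

lemma rot_near {d k : ℤ} (hk : 0 < k) (hd : 2 ≤ d) {T : Setoid ℤ} (hT : ENC k T) {x y : ℤ}
    (hxy : x < y) (hy : y < x + d * k) {j : ℤ} (h : T x (y + j * (d * k))) :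
    T x y ∨ T x (y - d * k) := by
  have hdk : 0 < d * k := by positivity
  have h2k : 2 * k ≤ d * k := by nlinarith
  rcases enc_far hk hT h with h1 | h1
  · rw [abs_lt] at h1
    have hj1 : -2 < j := by nlinarith
    have hj2 : j < 1 := by nlinarith
    have : j = 0 ∨ j = -1 := by omega
    rcases this with rfl | rfl
    · left; simpa using h
    · right; rwa [show y - d * k = y + -1 * (d * k) by ring]
  · left
    have h2 := enc_cen hT h1 (-j * d)
    have h3 := (enc_periods hT (-j * d) _ _).2 h
    rw [show y + j * (d * k) + -j * d * k = y by ring] at h3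
    exact Setoid.trans' _ h2 h3

lemma rotDown_nc {d k : ℤ} (hk : 0 < k) (hd : 2 ≤ d) (hn : (n : ℤ) = d * k) {T : Setoid ℤ}
    (hT : ENC k T) (hT' : ENC n T) : NCZ (rotDown T hT') := by
  apply ncz_of_cyc
  intro a b c e hab hbc hcd hd' h1 h2
  rw [rotDown_iff] at h1 h2 ⊢
  obtain ⟨i, hi⟩ := h1
  obtain ⟨j, hj⟩ := h2
  rw [hn] at hi hj hd'
  have sh : ∀ x y : ℤ, T x y → T (x - d * k) (y - d * k) := fun x y h => by
    have := (enc_periods hT (-d) _ _).2 h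
    rwa [show x + -d * k = x - d * k by ring, show y + -d * k = y - d * k by ring] at this
  have h1 := rot_near hk hd hT (by omega) (by omega) hi
  have h2 := rot_near hk hd hT (by omega) (by omega) hj
  rcases h1 with h1 | h1 <;> rcases h2 with h2 | h2
  · exact ⟨0, by simpa using hT.1 a b c e hab hbc hcd h1 h2⟩
  · refine ⟨0, ?_⟩
    have := hT.1 (e - d * k) a b c (by omega) hab hbc (Setoid.symm' _ h2) h1
    simpa using Setoid.symm' _ (Setoid.trans' _ h2 this)
  · refine ⟨-1, ?_⟩
    have := hT.1 (b - d * k) (c - d * k) (e - d * k) a (by omega) (by omega) (by omega)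
      (sh _ _ h2) (Setoid.symm' _ h1)
    rw [hn, show b + -1 * (d * k) = b - d * k by ring]
    exact Setoid.trans' _ h1 (Setoid.symm' _ this)
  · refine ⟨0, ?_⟩
    have := hT.1 (c - d * k) (e - d * k) a b (by omega) (by omega) (by omega)
      (Setoid.symm' _ h1) (Setoid.symm' _ h2)
    simpa using Setoid.trans' _ h1 (Setoid.trans' _ this (Setoid.symm' _ h2))

lemma card_rot (d k : ℕ) (hk : 0 < k) (hd : 2 ≤ d) (hn : n = d * k) :
    Nat.card {r : Setoid (ZMod n) // NCZ r ∧ ∀ x y, r (x + (k : ZMod n)) (y + (k : ZMod n)) ↔ r x y} =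
    Nat.card {T : Setoid ℤ // ENC k T ∧ True} := by
  have hnz : (n : ℤ) = d * k := by exact_mod_cast hn
  have hkz : (0 : ℤ) < k := by exact_mod_cast hk
  have hdz : (2 : ℤ) ≤ d := by exact_mod_cast hd
  have h2k : 2 * (k : ℤ) ≤ n := by rw [hnz]; nlinarith
  have mk : ∀ r : Setoid (ZMod n), NCZ r → (∀ x y, r (x + (k : ZMod n)) (y + (k : ZMod n)) ↔ r x y) →
      RotI n k r := fun r h1 h2 => ⟨hkz, h2k, h1, fun x y => by push_cast; exact h2 _ _⟩
  have e : ∀ x : ZMod n, ((x.val : ℤ) : ZMod n) = x := fun x => by simp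
  apply Nat.card_congr
  refine Equiv.ofBijective (fun r => ⟨rotLift k r.1 (mk r.1 r.2.1 r.2.2), rotLift_enc _ _ _, trivial⟩)
    ⟨?_, ?_⟩
  · have key : ∀ (r : Setoid (ZMod n)) (H : RotI n k r) (x y : ℤ), x < y → y < x + n →
        (r (x : ZMod n) (y : ZMod n) ↔ (rotLift k r H x y ∨ rotLift k r H x (y - n))) := by
      intro r H x y hxy hy
      simp only [rotLift_iff]
      have ee : ((y - n : ℤ) : ZMod n) = y := by simp
      rw [ee]
      constructor
      · intro h
        by_cases h1 : x + k ≤ y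
        · by_cases h2 : y + k ≤ x + n
          · exact Or.inl ⟨h, Or.inr (H.far h h1 h2)⟩
          · refine Or.inr ⟨h, Or.inl ?_⟩
            rw [abs_lt]; omega
        · refine Or.inl ⟨h, Or.inl ?_⟩
          rw [abs_lt]; omega
      · rintro (h | h) <;> exact h.1
    rintro ⟨r, h1, h2⟩ ⟨r', h1', h2'⟩ he
    simp only [Subtype.mk.injEq] at he ⊢
    have main : ∀ x y : ℤ, x < y → y < x + n →
        (r (x : ZMod n) (y : ZMod n) ↔ r' (x : ZMod n) (y : ZMod n)) := by
      intro x y hxy hy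
      rw [key r (mk r h1 h2) x y hxy hy, key r' (mk r' h1' h2') x y hxy hy, he]
    ext p q
    have hp := ZMod.val_lt p
    have hq := ZMod.val_lt q
    rcases lt_trichotomy p.val q.val with h | h | h
    · have := main p.val q.val (by omega) (by omega)
      rwa [e, e] at this
    · have : p = q := ZMod.val_injective n h
      subst this
      exact ⟨fun _ => Setoid.refl' _ _, fun _ => Setoid.refl' _ _⟩
    · have := main q.val p.val (by omega) (by omega)
      rw [e, e] at this
      rw [Setoid.comm' r, Setoid.comm' r']
      exact this
  · rintro ⟨T, hT, -⟩
    have hT' : ENC n T := by rw [hnz]; exact enc_mul hT d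
    have hnc := rotDown_nc hkz hdz hnz hT hT'
    have hinv : ∀ x y : ZMod n, rotDown T hT' (x + (k : ZMod n)) (y + (k : ZMod n)) ↔
        rotDown T hT' x y := by
      intro x y
      obtain ⟨x, rfl⟩ := ZMod.intCast_surjective x
      obtain ⟨y, rfl⟩ := ZMod.intCast_surjective y
      have e1 : ∀ z : ℤ, (z : ZMod n) + (k : ZMod n) = ((z + k : ℤ) : ZMod n) := fun z => by simp
      rw [e1, e1, rotDown_iff, rotDown_iff]
      apply exists_congr
      intro j
      rw [← hT.2 x, show y + k + j * (n : ℤ) = y + j * n + k by ring]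
    refine ⟨⟨rotDown T hT', hnc, hinv⟩, Subtype.ext ?_⟩
    have hcen : ∀ x : ℤ, cen k (rotDown T hT') x ↔ T x (x + k) := by
      intro x
      unfold cen
      rw [rotDown_iff]
      constructor
      · rintro ⟨j, hj⟩
        rcases enc_far hkz hT hj with h | h
        · exfalso
          rw [abs_lt] at h
          have : j < 0 := by nlinarith
          have : -1 < j := by nlinarith
          omega
        · exact h
      · intro h
        exact ⟨0, by simpa using h⟩
    ext x y
    simp only [rotLift_iff]
    rw [hcen, rotDown_iff]
    constructor
    · rintro ⟨⟨j, hj⟩, h | h⟩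
      · rcases enc_far hkz hT hj with h1 | h1
        · rw [abs_lt] at h h1
          have : j < 1 := by nlinarith
          have : -1 < j := by nlinarith
          have : j = 0 := by omega
          subst this
          simpa using hj
        · have h2 := enc_cen hT h1 (-j * d)
          have h3 := (enc_periods hT' (-j) _ _).2 hj
          rw [show y + j * (n : ℤ) + -j * n = y by ring, hnz, ← mul_assoc] at h3
          exact Setoid.trans' _ h2 h3
      · have h2 := enc_cen hT h (-j * d)
        have h3 := (enc_periods hT' (-j) _ _).2 hj
        rw [show y + j * (n : ℤ) + -j * n = y by ring, hnz, ← mul_assoc] at h3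
        exact Setoid.trans' _ h2 h3
    · intro h
      exact ⟨⟨0, by simpa using h⟩, enc_far hkz hT h⟩

end down

open MvPolynomial

section fin
variable {n : ℕ} [NeZero n]

lemma inv_zsmul {r : Setoid (ZMod n)} {a : ZMod n} (h : ∀ x y, r (x + a) (y + a) ↔ r x y) (j : ℤ) :
    ∀ x y, r (x + j * a) (y + j * a) ↔ r x y := by
  induction j using Int.induction_on with
  | zero => simp
  | succ i ih =>
    intro x y
    rw [← ih x y, ← h (x + (i : ℤ) * a)]
    push_cast
    ring_nf
  | pred i ih =>
    intro x y
    rw [← ih x y, ← h (x + (-i - 1 : ℤ) * a)]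
    push_cast
    ring_nf

lemma inv_gcd (l : ℤ) (r : Setoid (ZMod n)) :
    (∀ x y, r (x + (l : ZMod n)) (y + (l : ZMod n)) ↔ r x y) ↔
    (∀ x y, r (x + ((Int.gcd l n : ℕ) : ZMod n)) (y + ((Int.gcd l n : ℕ) : ZMod n)) ↔ r x y) := by
  constructor
  · intro h
    have e : ((Int.gcd l n : ℕ) : ZMod n) = (Int.gcdA l n : ℤ) * (l : ZMod n) := by
      have := congrArg (Int.cast : ℤ → ZMod n) (Int.gcd_eq_gcd_ab l n)
      push_cast at this
      rw [this]
      simp [mul_comm]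
    rw [e]
    exact inv_zsmul h _
  · intro h
    obtain ⟨j, hj⟩ := Int.gcd_dvd_left l n
    have e : (l : ZMod n) = (j : ℤ) * ((Int.gcd l n : ℕ) : ZMod n) := by
      have := congrArg (Int.cast : ℤ → ZMod n) hj
      push_cast at this
      rw [this]
      simp [mul_comm]
    rw [e]
    exact inv_zsmul h _

lemma card_conj (c : ℤ) (f g : ZMod n → ZMod n) (hfg : ∀ x, f (x + c) = g x + c) :
    Nat.card {r : Setoid (ZMod n) // NCZ r ∧ ∀ x y, r (f x) (f y) ↔ r x y} =
    Nat.card {r : Setoid (ZMod n) // NCZ r ∧ ∀ x y, r (g x) (g y) ↔ r x y} := by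
  have ncs : ∀ (c : ℤ) (r : Setoid (ZMod n)), NCZ r → NCZ (r.comap (fun x => x + (c : ZMod n))) := by
    intro c r hr
    apply ncz_of_cyc
    intro x y z w h1 h2 h3 h4 h5 h6
    have e1 : ∀ z : ℤ, (z : ZMod n) + (c : ZMod n) = ((z + c : ℤ) : ZMod n) := fun z => by simp
    rw [Setoid.comap_rel, e1, e1] at *
    exact ncz_cyc hr _ _ (z + c) (w + c) (by omega) (by omega) (by omega) (by omega) h5 h6
  apply Nat.card_congr
  refine ⟨fun r => ⟨r.1.comap (fun x => x + (c : ZMod n)), ncs c _ r.2.1, ?_⟩,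
    fun r => ⟨r.1.comap (fun x => x + ((-c : ℤ) : ZMod n)), ncs (-c) _ r.2.1, ?_⟩, ?_, ?_⟩
  · intro x y
    rw [Setoid.comap_rel, Setoid.comap_rel, ← hfg, ← hfg]
    exact r.2.2 _ _
  · intro x y
    rw [Setoid.comap_rel, Setoid.comap_rel]
    have hh : ∀ x, f x + ((-c : ℤ) : ZMod n) = g (x + ((-c : ℤ) : ZMod n)) := by
      intro x
      have := hfg (x + ((-c : ℤ) : ZMod n))
      push_cast at this ⊢
      rw [neg_add_cancel_right] at this
      rw [this]; ring
    rw [hh, hh]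
    exact r.2.2 _ _
  · rintro ⟨r, h⟩
    apply Subtype.ext
    ext x y
    simp [Setoid.comap_rel]
  · rintro ⟨r, h⟩
    apply Subtype.ext
    ext x y
    simp [Setoid.comap_rel]

lemma npos : 0 < n := Nat.pos_of_ne_zero (NeZero.ne n)

lemma count_id_final : Nat.card {π : Finpartition (Finset.univ : Finset (ZMod n)) //
      IsNoncrossing π ∧ π.parts.image (Finset.image (fun x => x)) = π.parts} = catalan n := by
  have hn : 0 < n := npos
  rw [card_fin (fun x => x) Function.bijective_id, card_lin (fun x => x) (fun x => x) (fun _ => rfl) (fun _ _ => Iff.rfl)]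
  rw [card_enc (by exact_mod_cast hn) (fun T => (∀ x y, x < 0 → 0 ≤ y → ¬ T x y) ∧
      ∀ x y, T x y ↔ T x y) (fun h => ∀ p, 0 ≤ h p)
      (fun h hh => by rw [← relOf_nonneg (by exact_mod_cast hn) hh]; simp)]
  rw [card_path n hn (fun y => 0 ≤ y), count_dyck]

lemma count_rot_final (l : ℤ) (d k : ℕ) (hk : 0 < k) (hd : 2 ≤ d) (hn : n = d * k)
    (hg : Int.gcd l n = k) : Nat.card {π : Finpartition (Finset.univ : Finset (ZMod n)) //
      IsNoncrossing π ∧ π.parts.image (Finset.image (fun x => x + (l : ZMod n))) = π.parts} =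
      (2 * k).choose k := by
  rw [card_fin (fun x => x + (l : ZMod n)) (Equiv.addRight (l : ZMod n)).bijective]
  simp only [inv_gcd, hg]
  rw [card_rot d k hk hd hn, card_enc (by exact_mod_cast hk) (fun _ => True)
    (fun h => ∀ p : ℤ, (fun _ : ℤ => True) (h p)) (fun h hh => by simp),
    card_path k hk (fun _ => True), count_free]

lemma count_refl_final (m : ℕ) (hm : n = 2 * m + 1) :
    Nat.card {π : Finpartition (Finset.univ : Finset (ZMod n)) //
      IsNoncrossing π ∧ π.parts.image (Finset.image (fun x => -x)) = π.parts} =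
      (2 * m + 1).choose m := by
  have hn : 0 < n := npos
  have hnz : (0 : ℤ) < n := by exact_mod_cast hn
  have hdiv : ∀ x : ℤ, (-1 - x) / n = -1 - x / n := by
    intro x
    have h1 := Int.emod_add_mul_ediv x n
    have h2 := Int.emod_nonneg x hnz.ne'
    have h3 := Int.emod_lt_of_pos x hnz
    rw [Int.ediv_eq_iff_of_pos hnz]
    constructor <;> nlinarith
  rw [card_fin (fun x => -x) (Equiv.neg (ZMod n)).bijective,
    card_conj (-(m : ℤ)) (fun x => -x) (fun x => -1 - x) (fun x => by
      have : ((2 * m + 1 : ℕ) : ZMod n) = 0 := by rw [← hm]; simp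
      push_cast at this ⊢
      linear_combination this),
    card_lin (fun x => -1 - x) (fun x => -1 - x) (fun x => by simp)
      (fun x y => by rw [hdiv, hdiv]; omega),
    card_enc hnz (fun T => (∀ x y, x < 0 → 0 ≤ y → ¬ T x y) ∧
      ∀ x y, T (-1 - x) (-1 - y) ↔ T x y) (fun h => (∀ p, 0 ≤ h p) ∧ ∀ p, h (-p) = h p)
      (fun h hh => by rw [relOf_nonneg hnz hh, relOf_symm hnz hh]),
    card_path_symm n hn, hm, count_prefix]

lemma rot_final (hodd : Odd n) (P : MvPolynomial (Fin 2) ℤ)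
    (hP : P * (gfib (n + 1) * gfibFact n * gfibFact n) = gfibFact (2 * n)) (l : ℤ) :
      aeval ![primRoot n ^ l + primRoot n ^ (-l), (-1 : ℂ)] P
        = (Nat.card {π : Finpartition (Finset.univ : Finset (ZMod n)) //
            IsNoncrossing π ∧
              π.parts.image (Finset.image (fun x => x + (l : ZMod n))) = π.parts} : ℂ) := by
  have hn : 0 < n := npos
  have hz : IsPrimitiveRoot (primRoot n) n := Complex.isPrimitiveRoot_exp n hn.ne'
  have hz0 : primRoot n ≠ 0 := hz.ne_zero hn.ne'
  set k := Int.gcd l n with hk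
  have hkp : 0 < k := Int.gcd_pos_of_ne_zero_right _ (by exact_mod_cast hn.ne')
  obtain ⟨d, hd⟩ : k ∣ n := by exact_mod_cast Int.gcd_dvd_right l n
  rw [mul_comm] at hd
  obtain ⟨l', hl'⟩ : (k : ℤ) ∣ l := Int.gcd_dvd_left l n
  have hd0 : d ≠ 0 := by rintro rfl; omega
  have hdn : ∀ e : ℤ, (n : ℤ) ∣ l * e ↔ (d : ℤ) ∣ e := by
    intro e
    have hkz : (k : ℤ) ≠ 0 := by exact_mod_cast hkp.ne'
    have hcop : IsCoprime (d : ℤ) l' := by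
      rw [Int.isCoprime_iff_gcd_eq_one]
      have h1 : Int.gcd l n = k * Int.gcd l' d := by
        conv_lhs => rw [hl', hd]
        push_cast
        rw [mul_comm (d : ℤ), Int.gcd_mul_left]
        simp
      rw [← hk] at h1
      have : Int.gcd l' d = 1 := Nat.eq_of_mul_eq_mul_left hkp (by omega)
      rw [Int.gcd_comm]; exact this
    rw [hd]
    push_cast
    rw [hl', mul_comm (d : ℤ), mul_assoc, mul_dvd_mul_iff_left hkz]
    exact ⟨fun h => hcop.dvd_of_dvd_mul_left h, fun h => h.mul_left _⟩
  by_cases h1 : d = 1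
  · have hl : (n : ℤ) ∣ l := by
      have := (hdn 1).2 (by simp [h1])
      simpa using this
    have e1 : (l : ZMod n) = 0 := (ZMod.intCast_zmod_eq_zero_iff_dvd l n).2 hl
    have e2 : primRoot n ^ l = 1 := (hz.zpow_eq_one_iff_dvd l).2 hl
    rw [zpow_neg, e2, e1]
    simp only [add_zero]
    rw [count_id_final, ← alg_id n P hP]
    norm_num
  · have hd2 : 2 ≤ d := by omega
    rw [count_rot_final l d k hkp hd2 hd hk.symm]
    have hP' := hP
    rw [hd] at hP'
    have hpow : ∀ (e : ℤ) (r : ℕ), (primRoot n ^ e) ^ r = 1 ↔ (n : ℤ) ∣ e * r := by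
      intro e r
      rw [← zpow_natCast, ← zpow_mul, hz.zpow_eq_one_iff_dvd]
    have := alg_rot (primRoot n ^ l) (primRoot n ^ (-l)) d k hd2
      ((hpow _ _).2 ((hdn _).2 dvd_rfl))
      ((hpow _ _).2 (by rw [neg_mul, dvd_neg]; exact (hdn _).2 dvd_rfl))
      (by
        intro r h0 hr he
        have h3 : (primRoot n ^ (l * 2)) ^ r = 1 := by
          have : primRoot n ^ (l * 2) = primRoot n ^ l * (primRoot n ^ (-l))⁻¹ := by
            rw [← zpow_neg, ← zpow_add₀ hz0]; ring_nf
          rw [this, mul_pow, he, ← mul_pow, mul_inv_cancel₀ (zpow_ne_zero _ hz0), one_pow]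
        rw [hpow] at h3
        have h4 : (n : ℤ) ∣ l * r := by
          have hc : IsCoprime (n : ℤ) 2 := by
            rw [Int.isCoprime_iff_gcd_eq_one]
            exact Nat.Coprime.symm (Nat.coprime_two_left.2 hodd)
          refine hc.dvd_of_dvd_mul_left (z := l * r) ?_
          rwa [show 2 * (l * (r : ℤ)) = l * 2 * r by ring]
        rw [hdn] at h4
        have h5 := Nat.le_of_dvd h0 (by exact_mod_cast h4)
        omega) P hP'
    rw [← this, ← zpow_add₀ hz0]
    simp

end fin

/-- Dihedral sieving for noncrossing partitions of `ℤ/nℤ`, `n` odd: the `(s,t)`-Catalan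
polynomial `P` evaluated at `(ζ^ℓ + ζ^{-ℓ}, -1)` counts the noncrossing partitions fixed
by the rotation `x ↦ x + ℓ`, and `P(0,1)` counts those fixed by the reflection
`x ↦ -x`. -/
theorem dihedral_sieving_noncrossing_partitions (n : ℕ) [NeZero n] (hn : Odd n)
    (P : MvPolynomial (Fin 2) ℤ)
    (hP : P * (gfib (n + 1) * gfibFact n * gfibFact n) = gfibFact (2 * n)) :
    (∀ ℓ : ℤ,
      aeval ![primRoot n ^ ℓ + primRoot n ^ (-ℓ), (-1 : ℂ)] P
        = (Nat.card {π : Finpartition (Finset.univ : Finset (ZMod n)) //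
            IsNoncrossing π ∧
              π.parts.image (Finset.image (fun x => x + (ℓ : ZMod n))) = π.parts} : ℂ)) ∧
    aeval ![(0 : ℂ), 1] P
      = (Nat.card {π : Finpartition (Finset.univ : Finset (ZMod n)) //
          IsNoncrossing π ∧
            π.parts.image (Finset.image (fun x => -x)) = π.parts} : ℂ) := by
  refine ⟨fun l => rot_final hn P hP l, ?_⟩
  obtain ⟨m, hm⟩ := hn
  rw [count_refl_final m hm]
  subst hm
  exact alg_refl m P hP
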